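/- arXiv:1603.04344 — 2 statements merged into one kernel-verified Lean document; each statement's English description precedes it below -/
import Mathlib

section
/- Let conditions A, B and C hold, set v_ε = p_ε^{−1}, and suppose condition D₁ holds. Then, for any family of initial distributions q̄_ε, the first-rare-event times ξ_ε converge in distribution as ε → 0 to a nonnegative random variable ξ₀ with Laplace transform E e^{−sξ₀} = 1/(1 + A(s)) for s ≥ 0; equivalently, E e^{−sξ_ε} → 1/(1 + A(s)) as ε → 0 for every s > 0. -/
open MeasureTheory Filter Set
open scoped Topology ENNReal

noncomputable section

/-- Condition B: there exists a ring chain of states `c 0, c 1, …, c N = c 0`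
containing all states of the phase space, with
`liminf_{ε→0+} p ε (c (k-1)) (c k) > 0` for `k = 1, …, N`. -/
def CondB {m : ℕ} (p : ℝ → Fin m → Fin m → ℝ) : Prop :=
  ∃ N : ℕ, 0 < N ∧ ∃ c : ℕ → Fin m, c N = c 0 ∧
    (∀ i : Fin m, ∃ k ≤ N, c k = i) ∧
    ∀ k < N, 0 < Filter.liminf (fun ε => p ε (c k) (c (k + 1))) (𝓝[>] (0 : ℝ))

/-- `π` is a stationary distribution of the transition matrix `p`. -/
def IsStationaryDist {m : ℕ} (p : Fin m → Fin m → ℝ) (π : Fin m → ℝ) : Prop :=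
  (∀ i, 0 ≤ π i) ∧ (∑ i, π i = 1) ∧ ∀ j, π j = ∑ i, π i * p i j

/-- `p_{ε,i} = P_i(ζ_{ε,1} = 1)`, the probability of occurrence of the rare event during
one transition step, starting from state `i`. -/
def rareP {m : ℕ} {Ω : Type} [MeasurableSpace Ω]
    (Pstart : ℝ → Fin m → Measure Ω) (ζ : ℝ → ℕ → Ω → Bool) (ε : ℝ) (i : Fin m) : ℝ :=
  (Pstart ε i {ω | ζ ε 1 ω = true}).toReal

/-- `p_ε = Σ_i π_{ε,i} p_{ε,i}`, the stationary average of the rare-event probabilities. -/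
def avgRare {m : ℕ} {Ω : Type} [MeasurableSpace Ω]
    (Pstart : ℝ → Fin m → Measure Ω) (ζ : ℝ → ℕ → Ω → Bool) (π : ℝ → Fin m → ℝ)
    (ε : ℝ) : ℝ :=
  ∑ i, π ε i * rareP Pstart ζ ε i

/-- `φ_ε(s) = Σ_i π_{ε,i} E_i e^{−sκ_{ε,1}}`, the stationary average of the Laplace
transforms of the sojourn times. -/
def lapPhi {m : ℕ} {Ω : Type} [MeasurableSpace Ω]
    (Pstart : ℝ → Fin m → Measure Ω) (κ : ℝ → ℕ → Ω → ℝ) (π : ℝ → Fin m → ℝ)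
    (ε s : ℝ) : ℝ :=
  ∑ i, π ε i * ∫ ω, Real.exp (-(s * κ ε 1 ω)) ∂(Pstart ε i)

/-- `ν_ε = min{n ≥ 1 : ζ_{ε,n} = 1}`, the number of steps until the first rare event. -/
def nuRE {Ω : Type} (ζ : ℝ → ℕ → Ω → Bool) (ε : ℝ) (ω : Ω) : ℕ :=
  sInf {n : ℕ | 1 ≤ n ∧ ζ ε n ω = true}

/-- `ξ_ε = Σ_{n=1}^{ν_ε} κ_{ε,n}`, the first-rare-event time. -/
def xiRE {Ω : Type} (κ : ℝ → ℕ → Ω → ℝ) (ζ : ℝ → ℕ → Ω → Bool) (ε : ℝ) (ω : Ω) : ℝ :=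
  ∑ n ∈ Finset.Icc 1 (nuRE ζ ε ω), κ ε n ω

/-- One-process form of the Markov renewal cylinder hypothesis. -/
def MRPcyl {m : ℕ} {Ω : Type} [MeasurableSpace Ω]
    (η : ℕ → Ω → Fin m) (κ : ℕ → Ω → ℝ) (ζ : ℕ → Ω → Bool) (P : Fin m → Measure Ω)
    (Q : Fin m → Fin m → ℝ → Bool → ℝ) : Prop :=
  ∀ n : ℕ, ∀ I : ℕ → Fin m, ∀ T : ℕ → ℝ, ∀ Z : ℕ → Bool,
      P (I 0) {ω | ∀ k ≤ n, (η k ω = I k ∧ (1 ≤ k → (κ k ω ≤ T k ∧ ζ k ω = Z k)))}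
        = ENNReal.ofReal (∏ k ∈ Finset.Icc 1 n, Q (I (k - 1)) (I k) (T k) (Z k))

section proc
variable {m : ℕ} {Ω : Type} [MeasurableSpace Ω]
    {η : ℕ → Ω → Fin m} {κ : ℕ → Ω → ℝ} {ζ : ℕ → Ω → Bool} {P : Fin m → Measure Ω}
    {Q : Fin m → Fin m → ℝ → Bool → ℝ}

theorem mrp_init (hprob : ∀ i, IsProbabilityMeasure (P i))
    (hη : ∀ n, Measurable (η n)) (h : MRPcyl η κ ζ P Q) (i : Fin m) :
    ∀ᵐ ω ∂(P i), η 0 ω = i := by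
  have h0 := h 0 (fun _ => i) (fun _ => 0) (fun _ => true)
  simp at h0
  rw [← prob_compl_eq_zero_iff (measurableSet_eq_fun (hη 0) measurable_const)] at h0
  exact h0

theorem mrp_one (hprob : ∀ i, IsProbabilityMeasure (P i))
    (hη : ∀ n, Measurable (η n)) (h : MRPcyl η κ ζ P Q) (i j : Fin m) (t : ℝ) (z : Bool) :
    P i {ω | η 1 ω = j ∧ κ 1 ω ≤ t ∧ ζ 1 ω = z} = ENNReal.ofReal (Q i j t z) := by
  have h1 := h 1 (fun k => if k = 0 then i else j) (fun _ => t) (fun _ => z)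
  simp at h1
  rw [← h1]
  apply measure_congr
  filter_upwards [mrp_init hprob hη h i] with ω hω
  apply propext
  change (_ ∧ _) ↔ (∀ k ≤ 1, _)
  constructor
  · intro hh k hk
    interval_cases k
    · simpa using hω
    · simpa using hh
  · intro hh
    simpa using hh 1 le_rfl

theorem mrp_prod (hprob : ∀ i, IsProbabilityMeasure (P i))
    (hη : ∀ n, Measurable (η n)) (h : MRPcyl η κ ζ P Q) (n : ℕ)
    (I : ℕ → Fin m) (T : ℕ → ℝ) (Z : ℕ → Bool) :
    P (I 0) {ω | ∀ k ≤ n, (η k ω = I k ∧ (1 ≤ k → (κ k ω ≤ T k ∧ ζ k ω = Z k)))}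
      = ∏ k ∈ Finset.range n,
        P (I k) {ω | η 1 ω = I (k+1) ∧ κ 1 ω ≤ T (k+1) ∧ ζ 1 ω = Z (k+1)} := by
  induction n with
  | zero => 
    rw [h]; simp
  | succ n ih =>
    rw [Finset.prod_range_succ, ← ih, mrp_one hprob hη h]
    have hmono : P (I 0) {ω | ∀ k ≤ n+1, (η k ω = I k ∧ (1 ≤ k → (κ k ω ≤ T k ∧ ζ k ω = Z k)))}
      ≤ P (I 0) {ω | ∀ k ≤ n, (η k ω = I k ∧ (1 ≤ k → (κ k ω ≤ T k ∧ ζ k ω = Z k)))} := by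
      apply measure_mono
      intro ω hω k hk
      exact hω k (by omega)
    rw [h, h] at hmono ⊢
    rw [Finset.prod_Icc_succ_top (by omega)] at hmono ⊢
    simp only [Nat.add_sub_cancel] at hmono ⊢
    set a := ∏ k ∈ Finset.Icc 1 n, Q (I (k - 1)) (I k) (T k) (Z k)
    set b := Q (I n) (I (n+1)) (T (n+1)) (Z (n+1))
    rcases le_or_gt 0 a with ha | ha
    · rw [ENNReal.ofReal_mul ha]
    · rw [ENNReal.ofReal_of_nonpos ha.le] at hmono ⊢
      simpa using hmono

theorem mrp_law (hprob : ∀ i, IsProbabilityMeasure (P i))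
    (hη : ∀ n, Measurable (η n)) (hκ : ∀ n, Measurable (κ n)) (hζ : ∀ n, Measurable (ζ n))
    (h : MRPcyl η κ ζ P Q) (n : ℕ)
    (I : ℕ → Fin m) (Z : ℕ → Bool) :
    Measure.pi (fun k : Fin n => ((P (I k)).restrict {ω | η 1 ω = I (k+1) ∧ ζ 1 ω = Z (k+1)}).map (κ 1))
     = ((P (I 0)).restrict {ω | ∀ k ≤ n, (η k ω = I k ∧ (1 ≤ k → ζ k ω = Z k))}).map
        (fun ω (k : Fin n) => κ (k+1) ω) := by
  apply Measure.pi_eq_generateFrom (C := fun _ => range Iic)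
  · intro _
    rw [← borel_eq_generateFrom_Iic]
    exact (BorelSpace.measurable_eq).symm
  · intro _
    rintro _ ⟨a, rfl⟩ _ ⟨b, rfl⟩ _
    exact ⟨a ⊓ b, by simp [Iic_inter_Iic]⟩
  · intro k
    exact ⟨fun n => Iic (n:ℝ), fun n => ⟨_, rfl⟩, fun n => measure_lt_top _ _, by
      rw [eq_univ_iff_forall]; intro x
      obtain ⟨n, hn⟩ := exists_nat_ge x
      exact mem_iUnion.2 ⟨n, hn⟩⟩
  · intro s hs
    choose t ht using hs
    have hs' : s = fun k => Iic (t k) := by ext1 k; exact (ht k).symm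
    subst hs'
    have hmeasE : ∀ (j : Fin m) (z : Bool) (k : ℕ), MeasurableSet {ω | η k ω = j ∧ ζ k ω = z} := by
      intro j z k
      exact (measurableSet_eq_fun (hη k) measurable_const).inter (measurableSet_eq_fun (hζ k) measurable_const)
    rw [Measure.map_apply (measurable_pi_lambda _ (fun k => hκ _)) 
      (MeasurableSet.univ_pi fun k => measurableSet_Iic),
      Measure.restrict_apply ((measurable_pi_lambda _ (fun k => hκ _)) 
      (MeasurableSet.univ_pi fun k => measurableSet_Iic))]
    have := mrp_prod hprob hη h n I (fun k => if hk : k - 1 < n then t ⟨k-1, hk⟩ else 0) Z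
    rw [Finset.prod_range] at this
    convert this using 1
    · congr 1
      ext ω
      simp only [mem_inter_iff, mem_preimage, Set.mem_pi, mem_univ, true_imp_iff, mem_Iic, mem_ofPred_eq]
      constructor
      · rintro ⟨h1, h2⟩ k hk
        refine ⟨(h2 k hk).1, fun hk1 => ⟨?_, (h2 k hk).2 hk1⟩⟩
        have hk2 : k - 1 < n := by omega
        have := h1 ⟨k-1, hk2⟩
        simp only [Nat.sub_add_cancel hk1] at this
        simpa [hk2] using this
      · intro h1
        refine ⟨fun k => ?_, fun k hk => ⟨(h1 k hk).1, fun hk1 => ((h1 k hk).2 hk1).2⟩⟩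
        have := ((h1 (k+1) (by omega)).2 (by omega)).1
        simpa using this
    · apply Finset.prod_congr rfl
      intro k _
      rw [Measure.map_apply (hκ 1) measurableSet_Iic, Measure.restrict_apply ((hκ 1) measurableSet_Iic)]
      congr 1
      ext ω
      simp
      tauto

/-- `c^z_{ij}(s)`. -/
def cTr (η : ℕ → Ω → Fin m) (κ : ℕ → Ω → ℝ) (ζ : ℕ → Ω → Bool) (P : Fin m → Measure Ω)
    (s : ℝ) (z : Bool) (i j : Fin m) : ℝ :=
  ∫ ω in {ω | η 1 ω = j ∧ ζ 1 ω = z}, Real.exp (-(s * κ 1 ω)) ∂(P i)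

theorem mrp_path_int (hprob : ∀ i, IsProbabilityMeasure (P i))
    (hη : ∀ n, Measurable (η n)) (hκ : ∀ n, Measurable (κ n)) (hζ : ∀ n, Measurable (ζ n))
    (h : MRPcyl η κ ζ P Q) (s : ℝ) (n : ℕ)
    (I : ℕ → Fin m) (Z : ℕ → Bool) :
    ∫ ω in {ω | ∀ k ≤ n, (η k ω = I k ∧ (1 ≤ k → ζ k ω = Z k))},
      Real.exp (-(s * ∑ k ∈ Finset.Icc 1 n, κ k ω)) ∂(P (I 0))
      = ∏ k : Fin n, cTr η κ ζ P s (Z (k+1)) (I k) (I (k+1)) := by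
  have hl := mrp_law hprob hη hκ hζ h n I Z
  have h1 := integral_fintype_prod_eq_prod (𝕜 := ℝ) (fun (k : Fin n) (x : ℝ) => Real.exp (-(s * x)))
    (μ := (fun k : Fin n => ((P (I k)).restrict {ω | η 1 ω = I (k+1) ∧ ζ 1 ω = Z (k+1)}).map (κ 1)))
  rw [hl, integral_map (measurable_pi_lambda _ (fun k => hκ _)).aemeasurable 
    (by apply Continuous.aestronglyMeasurable; fun_prop)] at h1
  convert h1 using 1
  · congr 1
    ext ω
    rw [← Real.exp_sum]
    congr 1
    rw [Finset.sum_neg_distrib, ← Finset.mul_sum, Finset.sum_fin_eq_sum_range]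
    congr 2
    rw [← Finset.Ico_succ_right_eq_Icc, Finset.sum_Ico_eq_sum_range]
    apply Finset.sum_congr (by simp)
    intro k hk
    simp at hk
    simp [hk, add_comm]
  · apply Finset.prod_congr rfl
    intro k _
    rw [integral_map (hκ 1).aemeasurable (by apply Continuous.aestronglyMeasurable; fun_prop)]
    rfl

/-- Path starting at `i` and following `J`. -/
def pth (i : Fin m) {n : ℕ} (J : Fin n → Fin m) : ℕ → Fin m
  | 0 => i
  | k+1 => if hk : k < n then J ⟨k, hk⟩ else i

theorem pth_cons_succ (i j : Fin m) {n : ℕ} (J : Fin n → Fin m) (k : ℕ) (hk : k ≤ n) :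
    pth i (Fin.cons j J : Fin (n+1) → Fin m) (k+1) = pth j J k := by
  cases k with
  | zero => 
    simp only [pth]
    simp
  | succ k =>
    simp only [pth]
    rw [dif_pos (by omega), dif_pos (by omega)]
    exact Fin.cons_succ (α := fun _ => Fin m) j J ⟨k, by omega⟩

/-- Sum over paths. -/
def pathSum (c : Bool → Fin m → Fin m → ℝ) (n : ℕ) (i : Fin m) : ℝ :=
  ∑ J : Fin n → Fin m, ∏ k : Fin n, c (decide ((k:ℕ)+1 = n)) (pth i J k) (pth i J (k+1))

theorem pathSum_one (c : Bool → Fin m → Fin m → ℝ) (i : Fin m) :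
    pathSum c 1 i = ∑ j, c true i j := by
  unfold pathSum
  rw [← (Equiv.funUnique (Fin 1) (Fin m)).symm.sum_comp]
  apply Finset.sum_congr rfl
  intro j _
  simp [pth]

theorem pathSum_succ (c : Bool → Fin m → Fin m → ℝ) (n : ℕ) (hn : 1 ≤ n) (i : Fin m) :
    pathSum c (n+1) i = ∑ j, c false i j * pathSum c n j := by
  unfold pathSum
  rw [← (Fin.consEquiv (fun _ : Fin (n+1) => Fin m)).sum_comp, Fintype.sum_prod_type]
  apply Finset.sum_congr rfl
  intro j _
  rw [Finset.mul_sum]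
  apply Finset.sum_congr rfl
  intro J _
  rw [Fin.prod_univ_succ]
  change c (decide (0 + 1 = n + 1)) i (pth i (Fin.cons j J : Fin (n+1) → Fin m) (0+1)) *
    ∏ k : Fin n, c (decide ((k:ℕ) + 1 + 1 = n + 1)) (pth i (Fin.cons j J : Fin (n+1) → Fin m) (k+1))
      (pth i (Fin.cons j J : Fin (n+1) → Fin m) (k+1+1)) = _
  rw [pth_cons_succ i j J 0 (by omega)]
  have h0 : decide (0 + 1 = n + 1) = false := by simp; omega
  rw [h0]
  congr 1
  apply Finset.prod_congr rfl
  intro k _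
  rw [pth_cons_succ i j J k (by omega), pth_cons_succ i j J (k+1) (by omega)]
  simp

/-- One-process version of `nuRE`. -/
def nu1 (ζ : ℕ → Ω → Bool) (ω : Ω) : ℕ := sInf {n : ℕ | 1 ≤ n ∧ ζ n ω = true}

/-- One-process version of `xiRE`. -/
def xi1 (κ : ℕ → Ω → ℝ) (ζ : ℕ → Ω → Bool) (ω : Ω) : ℝ :=
  ∑ n ∈ Finset.Icc 1 (nu1 ζ ω), κ n ω

theorem nu1_eq_iff (ζ : ℕ → Ω → Bool) (ω : Ω) (n : ℕ) (hn : 1 ≤ n) :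
    nu1 ζ ω = n ↔ ∀ k, 1 ≤ k → k ≤ n → ζ k ω = decide (k = n) := by
  constructor
  · intro h k hk hkn
    have hne : {n : ℕ | 1 ≤ n ∧ ζ n ω = true}.Nonempty := by
      by_contra hcon
      rw [Set.not_nonempty_iff_eq_empty] at hcon
      rw [nu1, hcon, Nat.sInf_empty] at h
      omega
    have hmem := Nat.sInf_mem hne
    rw [← nu1, h] at hmem
    rcases eq_or_lt_of_le hkn with rfl | hlt
    · simpa using hmem.2
    · have := Nat.notMem_of_lt_sInf (s := {n : ℕ | 1 ≤ n ∧ ζ n ω = true}) (m := k)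
        (by rw [← nu1, h]; exact hlt)
      have h2 : ζ k ω ≠ true := fun hh => this ⟨hk, hh⟩
      have h3 : k ≠ n := by omega
      simp [h3, h2]
  · intro h
    apply le_antisymm
    · apply Nat.sInf_le
      exact ⟨hn, by simpa using h n hn le_rfl⟩
    · apply le_csInf
      · exact ⟨n, hn, by simpa using h n hn le_rfl⟩
      · rintro b ⟨hb, hb2⟩
        by_contra hlt
        have := h b hb (by omega)
        rw [hb2] at this
        have h3 : b ≠ n := by omega
        simp [h3] at this

theorem measurable_nu1 (hζ : ∀ n, Measurable (ζ n)) (n : ℕ) : MeasurableSet {ω | nu1 ζ ω = n} := by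
  have key : ∀ n, 1 ≤ n → MeasurableSet {ω | nu1 ζ ω = n} := by
    intro n hn
    simp_rw [nu1_eq_iff ζ _ n hn]
    simp only [ofPred_forall]
    refine MeasurableSet.iInter fun k => MeasurableSet.iInter fun _ => MeasurableSet.iInter fun _ => ?_
    exact measurableSet_eq_fun (hζ k) measurable_const
  rcases Nat.eq_zero_or_pos n with rfl | hn
  · have : {ω | nu1 ζ ω = 0} = (⋃ n : ℕ, {ω | nu1 ζ ω = n+1})ᶜ := by
      ext ω
      simp only [mem_compl_iff, mem_iUnion, mem_ofPred_eq]
      constructor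
      · rintro h ⟨n, hn⟩; omega
      · intro h
        by_contra h2
        exact h ⟨nu1 ζ ω - 1, by omega⟩
    rw [this]
    exact (MeasurableSet.iUnion fun n => key _ (by omega)).compl
  · exact key n hn

theorem measurable_nu1' (hζ : ∀ n, Measurable (ζ n)) : Measurable (nu1 ζ) :=
  measurable_to_countable' fun n => measurable_nu1 hζ n

theorem measurable_xi1 (hκ : ∀ n, Measurable (κ n)) (hζ : ∀ n, Measurable (ζ n)) :
    Measurable (xi1 κ ζ) := by
  have h1 : Measurable (fun p : ℕ × Ω => ∑ n ∈ Finset.Icc 1 p.1, κ n p.2) := by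
    apply measurable_from_prod_countable_right
    intro n
    exact Finset.measurable_sum (Finset.Icc 1 n) fun k _ => hκ k
  exact h1.comp ((measurable_nu1' hζ).prodMk measurable_id)

theorem xi1_nonneg (hκnn : ∀ n ω, 0 ≤ κ n ω) (ω : Ω) : 0 ≤ xi1 κ ζ ω :=
  Finset.sum_nonneg fun n _ => hκnn n ω

theorem integrable_exp_neg {μ : Measure Ω} [IsFiniteMeasure μ] {f : Ω → ℝ} (hf : Measurable f)
    (h0 : ∀ ω, 0 ≤ f ω) (s : ℝ) (hs : 0 ≤ s) : Integrable (fun ω => Real.exp (-(s * f ω))) μ := by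
  refine Integrable.of_bound (C := 1) (by fun_prop) ?_
  filter_upwards with ω
  rw [Real.norm_eq_abs, abs_of_pos (Real.exp_pos _)]
  exact Real.exp_le_one_iff.2 (by have := mul_nonneg hs (h0 ω); linarith)

theorem gTr_eq (hprob : ∀ i, IsProbabilityMeasure (P i))
    (hη : ∀ n, Measurable (η n)) (hκ : ∀ n, Measurable (κ n)) (hζ : ∀ n, Measurable (ζ n))
    (hκnn : ∀ n ω, 0 ≤ κ n ω)
    (h : MRPcyl η κ ζ P Q) (s : ℝ) (hs : 0 ≤ s) (n : ℕ) (hn : 1 ≤ n) (i : Fin m) :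
    ∫ ω in {ω | nu1 ζ ω = n}, Real.exp (-(s * xi1 κ ζ ω)) ∂(P i)
      = pathSum (cTr η κ ζ P s) n i := by
  have hE : ∀ J : Fin n → Fin m, MeasurableSet
      {ω | ∀ k ≤ n, (η k ω = pth i J k ∧ (1 ≤ k → ζ k ω = decide (k = n)))} := by
    intro J
    simp only [ofPred_forall]
    refine MeasurableSet.iInter fun k => MeasurableSet.iInter fun _ => ?_
    refine (measurableSet_eq_fun (hη k) measurable_const).inter ?_
    change MeasurableSet {ω | 1 ≤ k → ζ k ω = decide (k = n)}
    by_cases hk : 1 ≤ k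
    · simp only [hk, true_imp_iff]
      exact measurableSet_eq_fun (hζ k) measurable_const
    · simp [hk]
  have h1 : ∫ ω in {ω | nu1 ζ ω = n}, Real.exp (-(s * xi1 κ ζ ω)) ∂(P i)
    = ∫ ω in ⋃ J : Fin n → Fin m, {ω | ∀ k ≤ n, (η k ω = pth i J k ∧ (1 ≤ k → ζ k ω = decide (k = n)))},
      Real.exp (-(s * xi1 κ ζ ω)) ∂(P i) := by
    apply setIntegral_congr_set
    filter_upwards [mrp_init hprob hη h i] with ω hω
    apply propext
    change (nu1 ζ ω = n) ↔ ω ∈ (⋃ J : Fin n → Fin m, {ω | ∀ k ≤ n, (η k ω = pth i J k ∧ (1 ≤ k → ζ k ω = decide (k = n)))})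
    rw [nu1_eq_iff ζ ω n hn, mem_iUnion]
    constructor
    · intro hh
      refine ⟨fun k => η (k+1) ω, fun k hk => ⟨?_, fun hk1 => hh k hk1 hk⟩⟩
      cases k with
      | zero => exact hω
      | succ k => simp only [pth]; rw [dif_pos (by omega)]
    · rintro ⟨J, hJ⟩ k hk hkn
      exact (hJ k hkn).2 hk
  rw [h1, integral_iUnion_fintype hE]
  · unfold pathSum
    apply Finset.sum_congr rfl
    intro J _
    have := mrp_path_int hprob hη hκ hζ h s n (pth i J) (fun k => decide (k = n))
    rw [← this]
    apply setIntegral_congr_fun (hE J)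
    intro ω hω
    have hnu : nu1 ζ ω = n := (nu1_eq_iff ζ ω n hn).2 fun k hk hkn => (hω k hkn).2 hk
    simp only [xi1, hnu]
  · intro J J' hJ
    rw [Function.onFun, Set.disjoint_left]
    intro ω h1 h2
    apply hJ
    ext1 k
    have := ((h1 (k+1) (by omega)).1).symm.trans (h2 (k+1) (by omega)).1
    simpa [pth] using this
  · intro J
    exact (integrable_exp_neg (measurable_xi1 hκ hζ) (xi1_nonneg hκnn) s hs).integrableOn

/-- `G_i(s) = E_i[e^{-sξ}; ν < ∞]`. -/
def GTr (κ : ℕ → Ω → ℝ) (ζ : ℕ → Ω → Bool) (P : Fin m → Measure Ω) (s : ℝ) (i : Fin m) : ℝ :=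
  ∫ ω, Real.exp (-(s * xi1 κ ζ ω)) ∂(P i) - (P i).real {ω | nu1 ζ ω = 0}

theorem GTr_hasSum (hprob : ∀ i, IsProbabilityMeasure (P i))
    (hη : ∀ n, Measurable (η n)) (hκ : ∀ n, Measurable (κ n)) (hζ : ∀ n, Measurable (ζ n))
    (hκnn : ∀ n ω, 0 ≤ κ n ω)
    (h : MRPcyl η κ ζ P Q) (s : ℝ) (hs : 0 ≤ s) (i : Fin m) :
    HasSum (fun n => pathSum (cTr η κ ζ P s) (n+1) i) (GTr κ ζ P s i) := by
  have h1 := hasSum_integral_iUnion (μ := P i) (f := fun ω => Real.exp (-(s * xi1 κ ζ ω)))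
    (s := fun n => {ω | nu1 ζ ω = n}) (measurable_nu1 hζ) (by
      intro a b hab
      rw [Function.onFun, Set.disjoint_left]
      intro ω h1 h2
      exact hab (h1.symm.trans h2)) 
      (integrable_exp_neg (measurable_xi1 hκ hζ) (xi1_nonneg hκnn) s hs).integrableOn
  have hU : (⋃ n, {ω | nu1 ζ ω = n}) = univ := by
    rw [eq_univ_iff_forall]; intro ω; exact mem_iUnion.2 ⟨_, rfl⟩
  rw [hU, setIntegral_univ, ← hasSum_nat_add_iff' 1] at h1
  have e1 : (fun n => pathSum (cTr η κ ζ P s) (n+1) i) =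
      fun n : ℕ => ∫ (x : Ω) in {ω | nu1 ζ ω = n + 1}, Real.exp (-(s * xi1 κ ζ x)) ∂P i := by
    ext n
    rw [gTr_eq hprob hη hκ hζ hκnn h s hs (n+1) (by omega)]
  have e2 : GTr κ ζ P s i = ∫ (x : Ω), Real.exp (-(s * xi1 κ ζ x)) ∂P i -
      ∑ k ∈ Finset.range 1, ∫ (x : Ω) in {ω | nu1 ζ ω = k}, Real.exp (-(s * xi1 κ ζ x)) ∂P i := by
    simp only [GTr, Finset.range_one, Finset.sum_singleton]
    congr 1
    rw [setIntegral_congr_fun (g := fun _ => (1:ℝ)) (measurable_nu1 hζ 0)]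
    · simp
    · intro ω hω
      have : nu1 ζ ω = 0 := hω
      simp [xi1, this]
  rw [e1, e2]
  exact h1

theorem cTr_nonneg (s : ℝ) (z : Bool) (i j : Fin m) : 0 ≤ cTr η κ ζ P s z i j :=
  integral_nonneg fun _ => (Real.exp_pos _).le

theorem GTr_renewal (hprob : ∀ i, IsProbabilityMeasure (P i))
    (hη : ∀ n, Measurable (η n)) (hκ : ∀ n, Measurable (κ n)) (hζ : ∀ n, Measurable (ζ n))
    (hκnn : ∀ n ω, 0 ≤ κ n ω)
    (h : MRPcyl η κ ζ P Q) (s : ℝ) (hs : 0 ≤ s) (i : Fin m) :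
    GTr κ ζ P s i = ∑ j, cTr η κ ζ P s false i j * GTr κ ζ P s j + ∑ j, cTr η κ ζ P s true i j := by
  have h1 := GTr_hasSum hprob hη hκ hζ hκnn h s hs
  have h2 := h1 i
  rw [← hasSum_nat_add_iff' 1] at h2
  have h3 : HasSum (fun n => pathSum (cTr η κ ζ P s) (n+1+1) i)
      (∑ j, cTr η κ ζ P s false i j * GTr κ ζ P s j) := by
    simp_rw [fun n => pathSum_succ (cTr η κ ζ P s) (n+1) (by omega) i]
    exact hasSum_sum fun j _ => (h1 j).mul_left _
  have h4 := h2.unique h3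
  simp only [Finset.range_one, Finset.sum_singleton, zero_add, pathSum_one] at h4
  linarith

theorem GTr_nonneg (hprob : ∀ i, IsProbabilityMeasure (P i))
    (hη : ∀ n, Measurable (η n)) (hκ : ∀ n, Measurable (κ n)) (hζ : ∀ n, Measurable (ζ n))
    (hκnn : ∀ n ω, 0 ≤ κ n ω)
    (h : MRPcyl η κ ζ P Q) (s : ℝ) (hs : 0 ≤ s) (i : Fin m) : 0 ≤ GTr κ ζ P s i := by
  refine (GTr_hasSum hprob hη hκ hζ hκnn h s hs i).nonneg fun n => ?_
  exact Finset.sum_nonneg fun J _ => Finset.prod_nonneg fun k _ => cTr_nonneg _ _ _ _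

theorem GTr_le_one (hprob : ∀ i, IsProbabilityMeasure (P i))
    (hκ : ∀ n, Measurable (κ n)) (hζ : ∀ n, Measurable (ζ n))
    (hκnn : ∀ n ω, 0 ≤ κ n ω)
    (s : ℝ) (hs : 0 ≤ s) (i : Fin m) : GTr κ ζ P s i ≤ 1 := by
  have h1 : ∫ ω, Real.exp (-(s * xi1 κ ζ ω)) ∂(P i) ≤ ∫ ω, (1:ℝ) ∂(P i) := by
    apply integral_mono (integrable_exp_neg (measurable_xi1 hκ hζ) (xi1_nonneg hκnn) s hs)
      (integrable_const _)
    intro ω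
    exact Real.exp_le_one_iff.2 (by have := mul_nonneg hs (xi1_nonneg (ζ := ζ) hκnn ω); linarith)
  simp at h1
  have : 0 ≤ (P i).real {ω | nu1 ζ ω = 0} := measureReal_nonneg
  unfold GTr
  linarith

theorem cTr_le (hprob : ∀ i, IsProbabilityMeasure (P i)) (hη : ∀ n, Measurable (η n))
    (hκ : ∀ n, Measurable (κ n)) (hκnn : ∀ n ω, 0 ≤ κ n ω)
    (s : ℝ) (hs : 0 ≤ s) (z : Bool) (i j : Fin m) :
    cTr η κ ζ P s z i j ≤ (P i {ω | η 1 ω = j}).toReal := by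
  have h1 : cTr η κ ζ P s z i j ≤ ∫ ω in {ω | η 1 ω = j ∧ ζ 1 ω = z}, (1:ℝ) ∂(P i) := by
    apply setIntegral_mono (integrable_exp_neg (hκ 1) (hκnn 1) s hs).integrableOn
      (integrable_const _).integrableOn
    intro ω
    exact Real.exp_le_one_iff.2 (by have := mul_nonneg hs (hκnn 1 ω); linarith)
  refine h1.trans ?_
  simp only [setIntegral_const, smul_eq_mul, mul_one]
  exact measureReal_mono (fun ω hω => hω.1)

theorem sum_cTr (hprob : ∀ i, IsProbabilityMeasure (P i)) (hη : ∀ n, Measurable (η n))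
    (hκ : ∀ n, Measurable (κ n)) (hζ : ∀ n, Measurable (ζ n)) (hκnn : ∀ n ω, 0 ≤ κ n ω)
    (s : ℝ) (hs : 0 ≤ s) (z : Bool) (i : Fin m) :
    ∑ j, cTr η κ ζ P s z i j = ∫ ω in {ω | ζ 1 ω = z}, Real.exp (-(s * κ 1 ω)) ∂(P i) := by
  unfold cTr
  rw [← integral_iUnion_fintype]
  · congr 2
    ext ω
    simp
  · intro j
    exact (measurableSet_eq_fun (hη 1) measurable_const).inter
      (measurableSet_eq_fun (hζ 1) measurable_const)
  · intro j j' hj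
    rw [Function.onFun, Set.disjoint_left]
    intro ω h1 h2
    exact hj (h1.1.symm.trans h2.1)
  · intro j
    exact (integrable_exp_neg (hκ 1) (hκnn 1) s hs).integrableOn

theorem sum_cTr_both (hprob : ∀ i, IsProbabilityMeasure (P i)) (hη : ∀ n, Measurable (η n))
    (hκ : ∀ n, Measurable (κ n)) (hζ : ∀ n, Measurable (ζ n)) (hκnn : ∀ n ω, 0 ≤ κ n ω)
    (s : ℝ) (hs : 0 ≤ s) (i : Fin m) :
    ∑ j, cTr η κ ζ P s false i j + ∑ j, cTr η κ ζ P s true i j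
      = ∫ ω, Real.exp (-(s * κ 1 ω)) ∂(P i) := by
  rw [sum_cTr hprob hη hκ hζ hκnn s hs, sum_cTr hprob hη hκ hζ hκnn s hs]
  have hms : MeasurableSet {ω | ζ 1 ω = false} := measurableSet_eq_fun (hζ 1) measurable_const
  have hc : {ω | ζ 1 ω = false}ᶜ = {ω | ζ 1 ω = true} := by
    ext ω
    simp
  rw [← hc]
  exact integral_add_compl hms (integrable_exp_neg (hκ 1) (hκnn 1) s hs)

theorem sum_cTr_true_bounds (hprob : ∀ i, IsProbabilityMeasure (P i)) (hη : ∀ n, Measurable (η n))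
    (hκ : ∀ n, Measurable (κ n)) (hζ : ∀ n, Measurable (ζ n)) (hκnn : ∀ n ω, 0 ≤ κ n ω)
    (s : ℝ) (hs : 0 ≤ s) (i : Fin m) (δ : ℝ) (hδ : 0 < δ) :
    ∑ j, cTr η κ ζ P s true i j ≤ (P i {ω | ζ 1 ω = true}).toReal ∧
    (P i {ω | ζ 1 ω = true}).toReal - ∑ j, cTr η κ ζ P s true i j ≤
      s * δ * (P i {ω | ζ 1 ω = true}).toReal + (P i {ω | δ < κ 1 ω ∧ ζ 1 ω = true}).toReal := by
  rw [sum_cTr hprob hη hκ hζ hκnn s hs]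
  have hint := (integrable_exp_neg (μ := P i) (hκ 1) (hκnn 1) s hs)
  have e1 : (P i {ω | ζ 1 ω = true}).toReal = ∫ ω in {ω | ζ 1 ω = true}, (1:ℝ) ∂(P i) := by
    simp [Measure.real]
  have hmδ : MeasurableSet {ω | δ < κ 1 ω} := measurableSet_lt measurable_const (hκ 1)
  have hle1 : ∀ ω, Real.exp (-(s * κ 1 ω)) ≤ 1 := fun ω =>
    Real.exp_le_one_iff.2 (by have := mul_nonneg hs (hκnn 1 ω); linarith)
  constructor
  · rw [e1]
    exact setIntegral_mono hint.integrableOn (integrable_const _).integrableOn hle1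
  · have e2 : (P i {ω | δ < κ 1 ω ∧ ζ 1 ω = true}).toReal =
        ∫ ω in {ω | ζ 1 ω = true}, {ω | δ < κ 1 ω}.indicator (fun _ => (1:ℝ)) ω ∂(P i) := by
      rw [integral_indicator hmδ, Measure.restrict_restrict hmδ]
      simp only [setIntegral_const, smul_eq_mul, mul_one]
      rfl
    have hi2 : Integrable ({ω | δ < κ 1 ω}.indicator (fun _ => (1:ℝ))) (P i) :=
      (integrable_const _).indicator hmδ
    rw [e2, e1, ← integral_sub (integrable_const _).integrableOn hint.integrableOn,
      ← integral_const_mul, ← integral_add (integrable_const _) hi2.integrableOn]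
    apply setIntegral_mono (((integrable_const _).sub hint).integrableOn)
      (((integrable_const _).add hi2).integrableOn)
    intro ω
    simp only [Pi.sub_apply, Pi.add_apply]
    by_cases hω : δ < κ 1 ω
    · rw [Set.indicator_of_mem (by exact hω)]
      have := mul_nonneg hs hδ.le
      have := (Real.exp_pos (-(s * κ 1 ω)))
      linarith
    · rw [Set.indicator_of_notMem (by exact hω)]
      have h1 := Real.add_one_le_exp (-(s * κ 1 ω))
      have h2 := mul_le_mul_of_nonneg_left (not_lt.1 hω) hs
      linarith

theorem row_sum (hprob : ∀ i, IsProbabilityMeasure (P i)) (hη : ∀ n, Measurable (η n)) (i : Fin m) :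
    ∑ j, (P i {ω | η 1 ω = j}).toReal = 1 := by
  have h1 := integral_iUnion_fintype (μ := P i) (f := fun _ => (1:ℝ)) (s := fun j => {ω | η 1 ω = j})
    (fun j => measurableSet_eq_fun (hη 1) measurable_const) (by
    intro j j' hj
    rw [Function.onFun, Set.disjoint_left]
    intro ω h1 h2
    exact hj (h1.symm.trans h2)) (fun j => (integrable_const _).integrableOn)
  have hU : (⋃ j, {ω | η 1 ω = j}) = univ := by
    rw [eq_univ_iff_forall]; intro ω; exact mem_iUnion.2 ⟨_, rfl⟩
  rw [hU, setIntegral_univ] at h1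
  simp only [smul_eq_mul, mul_one, integral_const, probReal_univ, measureReal_restrict_apply_univ] at h1
  exact h1.symm

end proc

theorem ring_small {m : ℕ} (E : Fin m → Fin m → Prop) (hE : ∀ i j, Relation.ReflTransGen E i j)
    (c0 : ℝ) (hc0 : 0 < c0) : ∃ K : ℝ, 0 ≤ K ∧ ∀ (D : Fin m → ℝ) (r : ℝ), 0 ≤ r →
      (∀ i j, E i j → c0 * D j ≤ D i + r) → ∀ i j, D i ≤ 0 → D j ≤ K * r := by
  have h1 : ∀ i j, ∃ K : ℝ, 0 ≤ K ∧ ∀ (D : Fin m → ℝ) (r : ℝ), 0 ≤ r →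
      (∀ i j, E i j → c0 * D j ≤ D i + r) → D i ≤ 0 → D j ≤ K * r := by
    intro i j
    induction hE i j with
    | refl => exact ⟨0, le_rfl, fun D r _ _ h => by simpa using h⟩
    | tail _ hjk ih =>
      obtain ⟨K, hK, h⟩ := ih
      refine ⟨(K+1)/c0, by positivity, fun D r hr hD hi => ?_⟩
      have h2 := h D r hr hD hi
      have h3 := hD _ _ hjk
      rw [div_mul_eq_mul_div, le_div_iff₀ hc0]
      linarith
  choose K hK0 hK using h1
  refine ⟨∑ i, ∑ j, K i j, Finset.sum_nonneg fun i _ => Finset.sum_nonneg fun j _ => hK0 i j, ?_⟩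
  intro D r hr hD i j hi
  refine (hK i j D r hr hD hi).trans (mul_le_mul_of_nonneg_right ?_ hr)
  calc K i j ≤ ∑ j, K i j := Finset.single_le_sum (fun j _ => hK0 i j) (Finset.mem_univ j)
    _ ≤ _ := Finset.single_le_sum (f := fun i => ∑ j, K i j)
      (fun i _ => Finset.sum_nonneg fun j _ => hK0 i j) (Finset.mem_univ i)

theorem ring_pi {m : ℕ} (E : Fin m → Fin m → Prop) (hE : ∀ i j, Relation.ReflTransGen E i j)
    (c0 : ℝ) (hc0 : 0 < c0) : ∃ K : ℝ, 0 ≤ K ∧ ∀ (π : Fin m → ℝ), (∀ i, 0 ≤ π i) → ∑ i, π i = 1 →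
      (∀ i j, E i j → c0 * π i ≤ π j) → ∀ j, 1 ≤ K * π j := by
  have h1 : ∀ i j, ∃ K : ℝ, 0 ≤ K ∧ ∀ (π : Fin m → ℝ),
      (∀ i j, E i j → c0 * π i ≤ π j) → π i ≤ K * π j := by
    intro i j
    induction hE i j with
    | refl => exact ⟨1, zero_le_one, fun π _ => by simp⟩
    | @tail j k _ hjk ih =>
      obtain ⟨K, hK, h⟩ := ih
      refine ⟨K/c0, by positivity, fun π hπ => ?_⟩
      have h2 := h π hπ
      have h3 := hπ _ _ hjk
      rw [div_mul_eq_mul_div, le_div_iff₀ hc0]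
      nlinarith [mul_le_mul_of_nonneg_left h3 hK]
  choose K hK0 hK using h1
  refine ⟨∑ j, ∑ i, K i j, Finset.sum_nonneg fun i _ => Finset.sum_nonneg fun j _ => hK0 j i, ?_⟩
  intro π h0 hs hπ j
  calc (1:ℝ) = ∑ i, π i := hs.symm
    _ ≤ ∑ i, K i j * π j := Finset.sum_le_sum fun i _ => hK i j π hπ
    _ = (∑ i, K i j) * π j := by rw [Finset.sum_mul]
    _ ≤ _ := mul_le_mul_of_nonneg_right (Finset.single_le_sum (f := fun j => ∑ i, K i j)
      (fun i _ => Finset.sum_nonneg fun j _ => hK0 j i) (Finset.mem_univ j)) (h0 j)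

theorem det_bound {m : ℕ} (hm : 0 < m) (E : Fin m → Fin m → Prop)
    (hE : ∀ i j, Relation.ReflTransGen E i j)
    (c0 : ℝ) (hc0 : 0 < c0) : ∃ K : ℝ, 0 ≤ K ∧ ∀ (p a : Fin m → Fin m → ℝ) (π b Ψ : Fin m → ℝ),
      (∀ i j, 0 ≤ p i j) → (∀ i, ∑ j, p i j = 1) → IsStationaryDist p π →
      (∀ i j, E i j → c0 ≤ p i j) → (∀ i j, a i j ≤ p i j) →
      (∀ i, 0 ≤ b i) → (∀ i, 0 ≤ Ψ i) → (∀ i, Ψ i = ∑ j, a i j * Ψ j + b i) →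
      ∀ k, |Ψ k * (∑ i, π i * (1 - ∑ j, a i j)) - ∑ i, π i * b i| ≤
        K * (∑ i, π i * b i) * (∑ i, π i * (1 - ∑ j, a i j)) := by
  obtain ⟨K1, hK1, h1⟩ := ring_small E hE c0 hc0
  obtain ⟨K2, hK2, h2⟩ := ring_pi E hE c0 hc0
  refine ⟨K1 * K2, mul_nonneg hK1 hK2, ?_⟩
  intro p a π b Ψ hp0 hp1 hπ hpE hap hb hΨ0 hren k
  obtain ⟨hπ0, hπ1, hπs⟩ := hπ
  have hedge : ∀ i j, E i j → c0 * π i ≤ π j := by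
    intro i j hij
    rw [hπs j]
    calc c0 * π i ≤ π i * p i j := by nlinarith [hpE i j hij, hπ0 i]
      _ ≤ _ := Finset.single_le_sum (f := fun i => π i * p i j)
        (fun i _ => mul_nonneg (hπ0 i) (hp0 i j)) (Finset.mem_univ i)
  have hπK := h2 π hπ0 hπ1 hedge
  set S := ∑ i, π i * b i with hS
  have hS0 : 0 ≤ S := Finset.sum_nonneg fun i _ => mul_nonneg (hπ0 i) (hb i)
  have hbS : ∀ i, b i ≤ K2 * S := by
    intro i
    have h3 : π i * b i ≤ S := Finset.single_le_sum (f := fun i => π i * b i)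
      (fun i _ => mul_nonneg (hπ0 i) (hb i)) (Finset.mem_univ i)
    nlinarith [mul_le_mul_of_nonneg_right (hπK i) (hb i), mul_le_mul_of_nonneg_left h3 hK2]
  haveI : Nonempty (Fin m) := ⟨⟨0, hm⟩⟩
  obtain ⟨i0, hi0⟩ := Finite.exists_max Ψ
  have hclose : ∀ j, Ψ i0 - Ψ j ≤ K1 * (K2 * S) := by
    intro j
    refine h1 (fun j => Ψ i0 - Ψ j) (K2 * S) (mul_nonneg hK2 hS0) ?_ i0 j (by simp)
    intro i j hij
    have h3 : c0 * (Ψ i0 - Ψ j) ≤ ∑ j, p i j * (Ψ i0 - Ψ j) :=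
      (mul_le_mul_of_nonneg_right (hpE i j hij) (by linarith [hi0 j])).trans
      (Finset.single_le_sum (f := fun j => p i j * (Ψ i0 - Ψ j))
        (fun j _ => mul_nonneg (hp0 i j) (by linarith [hi0 j])) (Finset.mem_univ j))
    have h4 : ∑ j, p i j * (Ψ i0 - Ψ j) = Ψ i0 - ∑ j, p i j * Ψ j := by
      simp_rw [mul_sub]
      rw [Finset.sum_sub_distrib, ← Finset.sum_mul, hp1, one_mul]
    have h5 : ∑ j, a i j * Ψ j ≤ ∑ j, p i j * Ψ j :=
      Finset.sum_le_sum fun j _ => mul_le_mul_of_nonneg_right (hap i j) (hΨ0 j)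
    have h6 := hren i
    have h7 := hbS i
    linarith
  have hid : Ψ k * (∑ i, π i * (1 - ∑ j, a i j)) - S =
      ∑ i, ∑ j, π i * (p i j - a i j) * (Ψ k - Ψ j) := by
    have e1 : ∑ i, ∑ j, π i * p i j * Ψ j = ∑ j, π j * Ψ j := by
      rw [Finset.sum_comm]
      apply Finset.sum_congr rfl
      intro j _
      rw [← Finset.sum_mul, ← hπs j]
    have e2 : ∑ i, π i * Ψ i = ∑ i, ∑ j, π i * a i j * Ψ j + S := by
      rw [hS, ← Finset.sum_add_distrib]
      apply Finset.sum_congr rfl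
      intro i _
      conv_lhs => rw [hren i]
      rw [mul_add, Finset.mul_sum]
      simp_rw [mul_assoc]
    have e3 : ∑ i, ∑ j, π i * (p i j - a i j) * (Ψ k - Ψ j) =
      Ψ k * (∑ i, π i * (1 - ∑ j, a i j)) - (∑ i, ∑ j, π i * p i j * Ψ j - ∑ i, ∑ j, π i * a i j * Ψ j) := by
      rw [← Finset.sum_sub_distrib, Finset.mul_sum, ← Finset.sum_sub_distrib]
      apply Finset.sum_congr rfl
      intro i _
      rw [← hp1 i, ← Finset.sum_sub_distrib, ← Finset.sum_sub_distrib, Finset.mul_sum, Finset.mul_sum,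
        ← Finset.sum_sub_distrib]
      apply Finset.sum_congr rfl
      intro j _
      ring
    linarith
  rw [hid]
  have hdiff : ∀ j, |Ψ k - Ψ j| ≤ K1 * (K2 * S) := by
    intro j
    rw [abs_le]
    constructor <;> linarith [hclose j, hclose k, hi0 j, hi0 k]
  calc |∑ i, ∑ j, π i * (p i j - a i j) * (Ψ k - Ψ j)|
      ≤ ∑ i, |∑ j, π i * (p i j - a i j) * (Ψ k - Ψ j)| := Finset.abs_sum_le_sum_abs _ _
    _ ≤ ∑ i, ∑ j, |π i * (p i j - a i j) * (Ψ k - Ψ j)| :=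
        Finset.sum_le_sum fun i _ => Finset.abs_sum_le_sum_abs _ _
    _ ≤ ∑ i, ∑ j, π i * (p i j - a i j) * (K1 * (K2 * S)) := by
        refine Finset.sum_le_sum fun i _ => Finset.sum_le_sum fun j _ => ?_
        have hn : 0 ≤ π i * (p i j - a i j) := mul_nonneg (hπ0 i) (by linarith [hap i j])
        rw [abs_mul, abs_of_nonneg hn]
        exact mul_le_mul_of_nonneg_left (hdiff j) hn
    _ = K1 * K2 * S * (∑ i, π i * (1 - ∑ j, a i j)) := by
        rw [Finset.mul_sum Finset.univ _ (K1 * K2 * S)]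
        apply Finset.sum_congr rfl
        intro i _
        rw [← Finset.sum_mul, ← Finset.mul_sum, Finset.sum_sub_distrib, hp1]
        ring

theorem det_limit {m : ℕ} (hm : 0 < m) (E : Fin m → Fin m → Prop)
    (hE : ∀ i j, Relation.ReflTransGen E i j)
    (c0 : ℝ) (hc0 : 0 < c0) (l : Filter ℝ)
    (p a : ℝ → Fin m → Fin m → ℝ) (π b Ψ : ℝ → Fin m → ℝ) (ρ : ℝ → ℝ) (L : ℝ) (hL : 0 ≤ L)
    (hev : ∀ᶠ ε in l, (∀ i j, 0 ≤ p ε i j) ∧ (∀ i, ∑ j, p ε i j = 1) ∧ IsStationaryDist (p ε) (π ε) ∧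
      (∀ i j, E i j → c0 ≤ p ε i j) ∧ (∀ i j, a ε i j ≤ p ε i j) ∧
      (∀ i, 0 ≤ b ε i) ∧ (∀ i, 0 ≤ Ψ ε i) ∧ (∀ i, Ψ ε i = ∑ j, a ε i j * Ψ ε j + b ε i) ∧ 0 < ρ ε)
    (hρ : Tendsto ρ l (𝓝 0))
    (hb : Tendsto (fun ε => (ρ ε)⁻¹ * ∑ i, π ε i * b ε i) l (𝓝 1))
    (ha : Tendsto (fun ε => (ρ ε)⁻¹ * ∑ i, π ε i * (1 - ∑ j, a ε i j)) l (𝓝 (1 + L))) (k : Fin m) :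
    Tendsto (fun ε => Ψ ε k) l (𝓝 (1 / (1 + L))) := by
  obtain ⟨K, hK, hbd⟩ := det_bound hm E hE c0 hc0
  have hS : Tendsto (fun ε => ∑ i, π ε i * b ε i) l (𝓝 0) := by
    have := hρ.mul hb
    rw [zero_mul] at this
    refine this.congr' ?_
    filter_upwards [hev] with ε h
    have : ρ ε ≠ 0 := h.2.2.2.2.2.2.2.2.ne'
    field_simp
  have hq := hb.div ha (by positivity)
  have hdiff : Tendsto (fun ε => Ψ ε k - ((ρ ε)⁻¹ * ∑ i, π ε i * b ε i) / ((ρ ε)⁻¹ * ∑ i, π ε i * (1 - ∑ j, a ε i j))) l (𝓝 0) := by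
    have hKS := hS.const_mul K
    rw [mul_zero] at hKS
    refine squeeze_zero_norm' ?_ hKS
    have hUpos : ∀ᶠ ε in l, 0 < (ρ ε)⁻¹ * ∑ i, π ε i * (1 - ∑ j, a ε i j) :=
      ha.eventually (lt_mem_nhds (by positivity))
    filter_upwards [hev, hUpos] with ε h hU
    obtain ⟨h1, h2, h3, h4, h5, h6, h7, h8, h9⟩ := h
    have := hbd (p ε) (a ε) (π ε) (b ε) (Ψ ε) h1 h2 h3 h4 h5 h6 h7 h8 k
    set U := ∑ i, π ε i * (1 - ∑ j, a ε i j)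
    set V := ∑ i, π ε i * b ε i
    have hU' : 0 < U := (pos_iff_pos_of_mul_pos hU).1 (inv_pos.2 h9)
    have e1 : Ψ ε k - ((ρ ε)⁻¹ * V) / ((ρ ε)⁻¹ * U) = (Ψ ε k * U - V) / U := by
      field_simp
    rw [e1, Real.norm_eq_abs, abs_div, abs_of_pos hU', div_le_iff₀ hU']
    exact this
  have := hdiff.add hq
  simpa using this

theorem ring_connected {m N : ℕ} (c : ℕ → Fin m) (hcN : c N = c 0)
    (hall : ∀ i : Fin m, ∃ k ≤ N, c k = i) (i j : Fin m) :
    Relation.ReflTransGen (fun i j => ∃ k < N, c k = i ∧ c (k+1) = j) i j := by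
  have key : ∀ t a, a + t ≤ N →
      Relation.ReflTransGen (fun i j => ∃ k < N, c k = i ∧ c (k+1) = j) (c a) (c (a+t)) := by
    intro t
    induction t with
    | zero => intro a _; exact .refl
    | succ t ih => 
      intro a ha
      exact (ih a (by omega)).tail ⟨a+t, by omega, rfl, rfl⟩
  obtain ⟨a, ha, rfl⟩ := hall i
  obtain ⟨b, hb, rfl⟩ := hall j
  have h1 := key (N-a) a (by omega)
  rw [show a + (N-a) = N by omega, hcN] at h1
  have h2 := key b 0 (by omega)
  rw [zero_add] at h2
  exact h1.trans h2

theorem laplace_continuity (ν : ℕ → Measure ℝ) (hν : ∀ n, IsProbabilityMeasure (ν n))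
    (hnn : ∀ n, ∀ᵐ x ∂(ν n), 0 ≤ x) (F : ℝ → ℝ)
    (hF : ∀ s > 0, Tendsto (fun n => ∫ x, Real.exp (-(s * x)) ∂(ν n)) atTop (𝓝 (F s)))
    (hF0 : Tendsto F (𝓝[>] (0:ℝ)) (𝓝 1)) :
    ∃ μ : Measure ℝ, IsProbabilityMeasure μ ∧ μ (Iio 0) = 0 ∧
      ∀ s > 0, ∫ x, Real.exp (-(s * x)) ∂μ = F s := by
  set e : ℝ := 1 - Real.exp (-1) with he
  have hepos : 0 < e := by
    have : Real.exp (-1) < 1 := by rw [← Real.exp_zero]; exact Real.exp_lt_exp.2 (by norm_num)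
    linarith
  have hint : ∀ n, ∀ s > 0, Integrable (fun x => Real.exp (-(s * x))) (ν n) := by
    intro n s hs
    refine Integrable.of_bound (C := 1) (by fun_prop) ?_
    filter_upwards [hnn n] with x hx
    rw [Real.norm_eq_abs, abs_of_pos (Real.exp_pos _)]
    exact Real.exp_le_one_iff.2 (by have := mul_nonneg hs.le hx; linarith)
  have hbound : ∀ r > 0, ∀ n, ν n {x | r < ‖x‖} ≤
      ENNReal.ofReal ((1 - ∫ x, Real.exp (-(r⁻¹ * x)) ∂(ν n)) / e) := by
    intro r hr n
    have hms : MeasurableSet {x : ℝ | r < ‖x‖} := measurableSet_lt measurable_const measurable_norm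
    have h1 : e * (ν n).real {x | r < ‖x‖} ≤ 1 - ∫ x, Real.exp (-(r⁻¹ * x)) ∂(ν n) := by
      have h2 : ∫ x, {x : ℝ | r < ‖x‖}.indicator (fun _ => e) x ∂(ν n) ≤
          ∫ x, (1 - Real.exp (-(r⁻¹ * x))) ∂(ν n) := by
        apply integral_mono_ae
        · exact (integrable_const e).indicator hms
        · exact (integrable_const 1).sub (hint n _ (inv_pos.2 hr))
        · filter_upwards [hnn n] with x hx
          by_cases hxr : r < ‖x‖
          · rw [Set.indicator_of_mem (by exact hxr)]
            rw [Real.norm_eq_abs, abs_of_nonneg hx] at hxr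
            have : 1 ≤ r⁻¹ * x := by
              rw [inv_mul_eq_div, le_div_iff₀ hr]; linarith
            have := Real.exp_le_exp.2 (neg_le_neg this)
            simp only [he]
            linarith
          · rw [Set.indicator_of_notMem (by exact hxr)]
            have : Real.exp (-(r⁻¹ * x)) ≤ 1 := Real.exp_le_one_iff.2 (by
              have := mul_nonneg (inv_pos.2 hr).le hx; linarith)
            linarith
      rw [integral_indicator hms, integral_sub (integrable_const _) (hint n _ (inv_pos.2 hr))] at h2
      simp at h2
      simpa [mul_comm] using h2
    rw [← ofReal_measureReal]
    apply ENNReal.ofReal_le_ofReal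
    rw [le_div_iff₀ hepos]
    linarith
  have htight : IsTightMeasureSet (Set.range ν) := by
    apply isTightMeasureSet_range_of_tendsto_limsup_measure_norm_gt
    have hlim : Tendsto (fun r : ℝ => ENNReal.ofReal ((1 - F r⁻¹) / e)) atTop (𝓝 0) := by
      have h1 : Tendsto (fun r : ℝ => (1 - F r⁻¹) / e) atTop (𝓝 ((1-1)/e)) :=
        ((hF0.comp tendsto_inv_atTop_nhdsGT_zero).const_sub 1).div_const e
      have h2 := ENNReal.tendsto_ofReal h1
      simpa using h2
    refine tendsto_of_tendsto_of_tendsto_of_le_of_le' tendsto_const_nhds hlim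
      (Eventually.of_forall fun _ => zero_le) ?_
    filter_upwards [eventually_gt_atTop 0] with r hr
    have h3 : Tendsto (fun n => ENNReal.ofReal ((1 - ∫ x, Real.exp (-(r⁻¹ * x)) ∂(ν n)) / e)) atTop
      (𝓝 (ENNReal.ofReal ((1 - F r⁻¹) / e))) :=
      ENNReal.tendsto_ofReal (((hF _ (inv_pos.2 hr)).const_sub 1).div_const e)
    rw [← h3.limsup_eq]
    exact limsup_le_limsup (Eventually.of_forall fun n => hbound r hr n)
  let V : ℕ → ProbabilityMeasure ℝ := fun n => ⟨ν n, hν n⟩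
  have hcomp : IsCompact (closure (Set.range V)) := by
    apply isCompact_closure_of_isTightMeasureSet
    convert htight using 1
    ext x
    constructor
    · rintro ⟨_, ⟨n, rfl⟩, rfl⟩
      exact ⟨n, rfl⟩
    · rintro ⟨n, rfl⟩
      exact ⟨V n, ⟨n, rfl⟩, rfl⟩
  obtain ⟨μ, -, φ, hφ, hlim⟩ := hcomp.tendsto_subseq (x := V) (fun n => subset_closure ⟨n, rfl⟩)
  have hneg : (μ : Measure ℝ) (Iio 0) = 0 := by
    have h1 := ProbabilityMeasure.le_liminf_measure_open_of_tendsto hlim (isOpen_Iio (a := (0:ℝ)))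
    have h2 : ∀ n, ((V ∘ φ) n : Measure ℝ) (Iio 0) = 0 := by
      intro n
      have := hnn (φ n)
      rw [ae_iff] at this
      have h3 : {a : ℝ | ¬ 0 ≤ a} = Iio 0 := by ext x; simp
      rw [h3] at this
      exact this
    simp only [h2] at h1
    simpa using h1
  refine ⟨μ, μ.2, hneg, fun s hs => ?_⟩
  rw [ProbabilityMeasure.tendsto_iff_forall_integral_tendsto] at hlim
  have hbd : ∀ x : ℝ, ‖Real.exp (-(s * max x 0))‖ ≤ 1 := by
    intro x
    rw [Real.norm_eq_abs, abs_of_pos (Real.exp_pos _)]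
    exact Real.exp_le_one_iff.2 (by have := mul_nonneg hs.le (le_max_right x 0); linarith)
  have h1 := hlim (BoundedContinuousFunction.ofNormedAddCommGroup
    (fun x => Real.exp (-(s * max x 0))) (by fun_prop) 1 hbd)
  simp only [BoundedContinuousFunction.coe_ofNormedAddCommGroup] at h1
  have hnn' : ∀ᵐ x ∂(μ : Measure ℝ), 0 ≤ x := by
    rw [ae_iff]
    have h3 : {a : ℝ | ¬ 0 ≤ a} = Iio 0 := by ext x; simp
    rw [h3]
    exact hneg
  have e1 : ∫ x, Real.exp (-(s * max x 0)) ∂(μ : Measure ℝ) = ∫ x, Real.exp (-(s * x)) ∂(μ : Measure ℝ) := by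
    apply integral_congr_ae
    filter_upwards [hnn'] with x hx
    rw [max_eq_left hx]
  have e2 : ∀ n, ∫ x, Real.exp (-(s * max x 0)) ∂((V ∘ φ) n : Measure ℝ) = ∫ x, Real.exp (-(s * x)) ∂(ν (φ n)) := by
    intro n
    apply integral_congr_ae
    filter_upwards [hnn (φ n)] with x hx
    rw [max_eq_left hx]
  simp only [e1, e2] at h1
  exact tendsto_nhds_unique h1 ((hF s hs).comp hφ.tendsto_atTop)

theorem condB_edges {m : ℕ} (p : ℝ → Fin m → Fin m → ℝ) (hB : CondB p)
    (hp0 : ∀ᶠ ε in 𝓝[>] (0:ℝ), ∀ i j, 0 ≤ p ε i j) :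
    ∃ (E : Fin m → Fin m → Prop) (c0 : ℝ), 0 < c0 ∧ (∀ i j, Relation.ReflTransGen E i j) ∧
      ∀ᶠ ε in 𝓝[>] (0:ℝ), ∀ i j, E i j → c0 ≤ p ε i j := by
  obtain ⟨N, hN, c, hcN, hall, hlim⟩ := hB
  have key : ∀ n ≤ N, ∃ c0 : ℝ, 0 < c0 ∧ ∀ᶠ ε in 𝓝[>] (0:ℝ), ∀ k < n, c0 ≤ p ε (c k) (c (k+1)) := by
    intro n
    induction n with
    | zero => intro _; exact ⟨1, one_pos, by simp⟩
    | succ n ih =>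
      intro hn
      obtain ⟨c1, hc1, h1⟩ := ih (by omega)
      obtain ⟨c2, hc2, hc2'⟩ := exists_between (hlim n (by omega))
      have h2 := eventually_lt_of_lt_liminf hc2'
        ⟨0, by rw [eventually_map]; filter_upwards [hp0] with ε h using h _ _⟩
      refine ⟨min c1 c2, lt_min hc1 hc2, ?_⟩
      filter_upwards [h1, h2] with ε h1 h2 k hk
      rcases Nat.lt_succ_iff_lt_or_eq.1 hk with h | rfl
      · exact (min_le_left _ _).trans (h1 k h)
      · exact (min_le_right _ _).trans h2.le
  obtain ⟨c0, hc0, h⟩ := key N le_rfl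
  refine ⟨fun i j => ∃ k < N, c k = i ∧ c (k+1) = j, c0, hc0, ring_connected c hcN hall, ?_⟩
  filter_upwards [h] with ε h
  rintro i j ⟨k, hk, rfl, rfl⟩
  exact h k hk

theorem G_limit {m : ℕ} (hm : 0 < m) (ε₀ : ℝ) (hε₀ : 0 < ε₀)
    {Ω : Type} [MeasurableSpace Ω]
    (η : ℝ → ℕ → Ω → Fin m) (κ : ℝ → ℕ → Ω → ℝ) (ζ : ℝ → ℕ → Ω → Bool)
    (Pstart : ℝ → Fin m → Measure Ω)
    (hprob : ∀ ε i, IsProbabilityMeasure (Pstart ε i))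
    (hmeas : ∀ ε n, Measurable (η ε n) ∧ Measurable (κ ε n) ∧ Measurable (ζ ε n))
    (hκnn : ∀ ε n ω, 0 ≤ κ ε n ω)
    (Q : ℝ → Fin m → Fin m → ℝ → Bool → ℝ)
    (hMRP : ∀ ε ∈ Ioc (0:ℝ) ε₀, MRPcyl (η ε) (κ ε) (ζ ε) (Pstart ε) (Q ε))
    (p : ℝ → Fin m → Fin m → ℝ)
    (hp : ∀ ε ∈ Ioc (0:ℝ) ε₀, ∀ i j, p ε i j = (Pstart ε i {ω | η ε 1 ω = j}).toReal)
    (hB : CondB p)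
    (π : ℝ → Fin m → ℝ)
    (hπ : ∀ᶠ ε in 𝓝[>] (0:ℝ), IsStationaryDist (fun i j => p ε i j) (π ε))
    (hA1 : ∀ ε ∈ Ioc (0:ℝ) ε₀, ∃ i, 0 < rareP Pstart ζ ε i)
    (hA2 : ∀ i, Tendsto (fun ε => rareP Pstart ζ ε i) (𝓝[>] (0:ℝ)) (𝓝 0))
    (hC : ∀ i : Fin m, ∀ δ > 0, Tendsto
      (fun ε => (Pstart ε i {ω | δ < κ ε 1 ω ∧ ζ ε 1 ω = true}).toReal / rareP Pstart ζ ε i)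
      (𝓝[>] (0:ℝ)) (𝓝 0))
    (s L : ℝ) (hs : 0 ≤ s) (hL : 0 ≤ L)
    (hD : Tendsto
      (fun ε => (avgRare Pstart ζ π ε)⁻¹ * (1 - lapPhi Pstart κ π ε s))
      (𝓝[>] (0:ℝ)) (𝓝 L)) (i : Fin m) :
    Tendsto (fun ε => GTr (κ ε) (ζ ε) (Pstart ε) s i) (𝓝[>] (0:ℝ)) (𝓝 (1 / (1 + L))) := by
  have hIoc : ∀ᶠ ε in 𝓝[>] (0:ℝ), ε ∈ Ioc (0:ℝ) ε₀ := Ioc_mem_nhdsGT hε₀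
  have hp0 : ∀ᶠ ε in 𝓝[>] (0:ℝ), ∀ i j, 0 ≤ p ε i j := by
    filter_upwards [hIoc] with ε hε i j
    rw [hp ε hε]
    exact ENNReal.toReal_nonneg
  obtain ⟨E, c0, hc0, hE, hEp⟩ := condB_edges p hB hp0
  obtain ⟨K, hK, hKπ⟩ := ring_pi E hE c0 hc0
  have hr0 : ∀ ε i, 0 ≤ rareP Pstart ζ ε i := fun ε i => ENNReal.toReal_nonneg
  have hρpos : ∀ᶠ ε in 𝓝[>] (0:ℝ), 0 < avgRare Pstart ζ π ε := by
    filter_upwards [hIoc, hp0, hEp, hπ] with ε hε hp0 hEp hπ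
    obtain ⟨hπ0, hπ1, hπs⟩ := hπ
    have hedge : ∀ i j, E i j → c0 * π ε i ≤ π ε j := by
      intro i j hij
      rw [hπs j]
      calc c0 * π ε i ≤ π ε i * p ε i j := by nlinarith [hEp i j hij, hπ0 i]
        _ ≤ _ := Finset.single_le_sum (f := fun i => π ε i * p ε i j)
          (fun i _ => mul_nonneg (hπ0 i) (hp0 i j)) (Finset.mem_univ i)
    have h1 := hKπ (π ε) hπ0 hπ1 hedge
    obtain ⟨i, hi⟩ := hA1 ε hε
    have hπi : 0 < π ε i := by
      rcases (hπ0 i).lt_or_eq with h | h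
      · exact h
      · have := h1 i
        rw [← h] at this
        norm_num at this
    exact Finset.sum_pos' (fun i _ => mul_nonneg (hπ0 i) (hr0 ε i))
      ⟨i, Finset.mem_univ i, mul_pos hπi hi⟩
  have hπle : ∀ᶠ ε in 𝓝[>] (0:ℝ), ∀ i, 0 ≤ π ε i ∧ π ε i ≤ 1 := by
    filter_upwards [hπ] with ε hπ i
    refine ⟨hπ.1 i, ?_⟩
    rw [← hπ.2.1]
    exact Finset.single_le_sum (f := π ε) (fun i _ => hπ.1 i) (Finset.mem_univ i)
  have hρ : Tendsto (avgRare Pstart ζ π) (𝓝[>] (0:ℝ)) (𝓝 0) := by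
    have h1 : Tendsto (fun ε => ∑ i, rareP Pstart ζ ε i) (𝓝[>] (0:ℝ)) (𝓝 0) := by
      have := tendsto_finsetSum Finset.univ (fun i _ => hA2 i)
      simpa using this
    refine tendsto_of_tendsto_of_tendsto_of_le_of_le' tendsto_const_nhds h1
      (hρpos.mono fun ε h => h.le) ?_
    filter_upwards [hπle] with ε h
    exact Finset.sum_le_sum fun i _ => by
      have := mul_le_mul_of_nonneg_right (h i).2 (hr0 ε i)
      linarith
  have hb : Tendsto (fun ε => (avgRare Pstart ζ π ε)⁻¹ *
      ∑ i, π ε i * ∑ j, cTr (η ε) (κ ε) (ζ ε) (Pstart ε) s true i j) (𝓝[>] (0:ℝ)) (𝓝 1) := by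
    rw [Metric.tendsto_nhds]
    intro e he
    set δ := e / (2 * (s+1)) with hδdef
    have hδ : 0 < δ := by positivity
    have hsδ : s * δ < e / 2 := by
      rw [hδdef, mul_div_assoc', div_lt_div_iff₀ (by positivity) (by norm_num)]
      nlinarith
    have hCs : Tendsto (fun ε => ∑ i, (Pstart ε i {ω | δ < κ ε 1 ω ∧ ζ ε 1 ω = true}).toReal /
        rareP Pstart ζ ε i) (𝓝[>] (0:ℝ)) (𝓝 0) := by
      have := tendsto_finsetSum Finset.univ (fun i _ => hC i δ hδ)
      simpa using this
    filter_upwards [hCs.eventually (gt_mem_nhds (half_pos he)), hρpos, hπle] with ε hCe hρp hπe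
    have hbnd := fun i => sum_cTr_true_bounds (hprob ε) (fun n => (hmeas ε n).1)
      (fun n => (hmeas ε n).2.1) (fun n => (hmeas ε n).2.2) (hκnn ε) s hs i δ hδ
    set b : Fin m → ℝ := fun i => ∑ j, cTr (η ε) (κ ε) (ζ ε) (Pstart ε) s true i j
    set C : Fin m → ℝ := fun i => (Pstart ε i {ω | δ < κ ε 1 ω ∧ ζ ε 1 ω = true}).toReal /
        rareP Pstart ζ ε i
    set ρ := avgRare Pstart ζ π ε with hρdef
    have hCnn : ∀ i, 0 ≤ C i := fun i => div_nonneg ENNReal.toReal_nonneg (hr0 ε i)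
    have hup : ∑ i, π ε i * b i ≤ ρ :=
      Finset.sum_le_sum fun i _ => mul_le_mul_of_nonneg_left (hbnd i).1 (hπe i).1
    have hlow : ρ - ∑ i, π ε i * b i ≤ (s * δ + ∑ i, C i) * ρ := by
      rw [hρdef, avgRare, ← Finset.sum_sub_distrib, Finset.mul_sum]
      apply Finset.sum_le_sum
      intro i _
      have h1 := (hbnd i).2
      have h2 : (Pstart ε i {ω | δ < κ ε 1 ω ∧ ζ ε 1 ω = true}).toReal = C i * rareP Pstart ζ ε i := by
        rcases (hr0 ε i).lt_or_eq with h | h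
        · exact (div_mul_cancel₀ _ h.ne').symm
        · rw [← h, mul_zero]
          apply le_antisymm _ ENNReal.toReal_nonneg
          rw [h]
          exact measureReal_mono (μ := Pstart ε i) (fun ω hω => hω.2)
      have h3 : C i ≤ ∑ i, C i := Finset.single_le_sum (fun i _ => hCnn i) (Finset.mem_univ i)
      rw [h2] at h1
      change rareP Pstart ζ ε i - b i ≤ s * δ * rareP Pstart ζ ε i + _ at h1
      have h4 : rareP Pstart ζ ε i - b i ≤ (s * δ + ∑ i, C i) * rareP Pstart ζ ε i := by
        nlinarith [mul_le_mul_of_nonneg_right h3 (hr0 ε i)]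
      have h5 := mul_le_mul_of_nonneg_left h4 (hπe i).1
      linarith
    rw [Real.dist_eq, inv_mul_eq_div, abs_lt]
    constructor
    · have : 1 - e < (∑ i, π ε i * b i) / ρ := by
        rw [lt_div_iff₀ hρp]
        nlinarith
      linarith
    · have : (∑ i, π ε i * b i) / ρ ≤ 1 := by
        rw [div_le_one hρp]; exact hup
      linarith
  have ha : Tendsto (fun ε => (avgRare Pstart ζ π ε)⁻¹ *
      ∑ i, π ε i * (1 - ∑ j, cTr (η ε) (κ ε) (ζ ε) (Pstart ε) s false i j))
      (𝓝[>] (0:ℝ)) (𝓝 (1 + L)) := by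
    refine (hb.add hD).congr' ?_
    filter_upwards [hπ] with ε hπ
    rw [← mul_add]
    congr 1
    rw [lapPhi, ← hπ.2.1, ← Finset.sum_sub_distrib, ← Finset.sum_add_distrib]
    apply Finset.sum_congr rfl
    intro i _
    rw [← sum_cTr_both (hprob ε) (fun n => (hmeas ε n).1)
      (fun n => (hmeas ε n).2.1) (fun n => (hmeas ε n).2.2) (hκnn ε) s hs i, hπ.2.1]
    ring
  refine det_limit hm E hE c0 hc0 (𝓝[>] (0:ℝ)) p
    (fun ε => cTr (η ε) (κ ε) (ζ ε) (Pstart ε) s false) π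
    (fun ε i => ∑ j, cTr (η ε) (κ ε) (ζ ε) (Pstart ε) s true i j)
    (fun ε => GTr (κ ε) (ζ ε) (Pstart ε) s) (avgRare Pstart ζ π) L hL ?_ hρ hb ha i
  filter_upwards [hIoc, hp0, hEp, hπ, hρpos] with ε hε hp0 hEp hπ hρpos
  have m1 := fun n => (hmeas ε n).1
  have m2 := fun n => (hmeas ε n).2.1
  have m3 := fun n => (hmeas ε n).2.2
  refine ⟨hp0, fun i => ?_, hπ, hEp, fun i j => ?_, fun i => ?_, fun i => ?_, fun i => ?_, hρpos⟩
  · simp_rw [hp ε hε]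
    exact row_sum (hprob ε) m1 i
  · rw [hp ε hε]
    exact cTr_le (hprob ε) m1 m2 (hκnn ε) s hs false i j
  · exact Finset.sum_nonneg fun j _ => cTr_nonneg _ _ _ _
  · exact GTr_nonneg (hprob ε) m1 m2 m3 (hκnn ε) (hMRP ε hε) s hs i
  · exact GTr_renewal (hprob ε) m1 m2 m3 (hκnn ε) (hMRP ε hε) s hs i

/-- Theorem 1, sufficiency part: under conditions A, B, C and D₁ the
first-rare-event times `ξ_ε` converge in distribution to a nonnegative random variable
`ξ₀` with Laplace transform `1/(1 + A(s))`. -/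
theorem stmt6 {m : ℕ} (hm : 0 < m) (ε₀ : ℝ) (hε₀ : 0 < ε₀)
    {Ω : Type} [MeasurableSpace Ω]
    (η : ℝ → ℕ → Ω → Fin m) (κ : ℝ → ℕ → Ω → ℝ) (ζ : ℝ → ℕ → Ω → Bool)
    (Pstart : ℝ → Fin m → Measure Ω)
    (hprob : ∀ ε i, IsProbabilityMeasure (Pstart ε i))
    (hmeas : ∀ ε n, Measurable (η ε n) ∧ Measurable (κ ε n) ∧ Measurable (ζ ε n))
    (hκnn : ∀ ε n ω, 0 ≤ κ ε n ω)
    -- Markov renewal structure with kernel Q_{ε,ij}(t, ι)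
    (Q : ℝ → Fin m → Fin m → ℝ → Bool → ℝ)
    (hMRP : ∀ ε ∈ Ioc (0:ℝ) ε₀, ∀ n : ℕ, ∀ I : ℕ → Fin m, ∀ T : ℕ → ℝ, ∀ Z : ℕ → Bool,
      Pstart ε (I 0)
          {ω | ∀ k ≤ n, (η ε k ω = I k ∧ (1 ≤ k → (κ ε k ω ≤ T k ∧ ζ ε k ω = Z k)))}
        = ENNReal.ofReal (∏ k ∈ Finset.Icc 1 n, Q ε (I (k - 1)) (I k) (T k) (Z k)))
    -- embedded Markov chain and condition B
    (p : ℝ → Fin m → Fin m → ℝ)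
    (hp : ∀ ε ∈ Ioc (0:ℝ) ε₀, ∀ i j, p ε i j = (Pstart ε i {ω | η ε 1 ω = j}).toReal)
    (hB : CondB p)
    (π : ℝ → Fin m → ℝ)
    (hπ : ∀ᶠ ε in 𝓝[>] (0:ℝ), IsStationaryDist (fun i j => p ε i j) (π ε))
    -- condition A
    (hA1 : ∀ ε ∈ Ioc (0:ℝ) ε₀, ∃ i, 0 < rareP Pstart ζ ε i)
    (hA2 : ∀ i, Tendsto (fun ε => rareP Pstart ζ ε i) (𝓝[>] (0:ℝ)) (𝓝 0))
    -- condition C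
    (hC : ∀ i : Fin m, ∀ δ > 0, Tendsto
      (fun ε => (Pstart ε i {ω | δ < κ ε 1 ω ∧ ζ ε 1 ω = true}).toReal / rareP Pstart ζ ε i)
      (𝓝[>] (0:ℝ)) (𝓝 0))
    -- condition D₁, with v_ε = p_ε⁻¹
    (A : ℝ → ℝ)
    (hD : ∀ s > 0, Tendsto
      (fun ε => (avgRare Pstart ζ π ε)⁻¹ * (1 - lapPhi Pstart κ π ε s))
      (𝓝[>] (0:ℝ)) (𝓝 (A s)))
    (hApos : ∀ s > 0, 0 < A s)
    (hA0 : Tendsto A (𝓝[>] (0:ℝ)) (𝓝 0))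
    -- arbitrary family of initial distributions
    (q : ℝ → Fin m → ℝ) (Pq : ℝ → Measure Ω)
    (hq : ∀ ε ∈ Ioc (0:ℝ) ε₀, (∀ i, 0 ≤ q ε i) ∧ ∑ i, q ε i = 1)
    (hmix : ∀ ε ∈ Ioc (0:ℝ) ε₀, Pq ε = ∑ i, ENNReal.ofReal (q ε i) • Pstart ε i) :
    ∃ μ : Measure ℝ, IsProbabilityMeasure μ ∧ μ (Iio 0) = 0 ∧
      (∀ s > 0, ∫ x, Real.exp (-(s * x)) ∂μ = 1 / (1 + A s)) ∧
      ∀ s > 0, Tendsto (fun ε => ∫ ω, Real.exp (-(s * xiRE κ ζ ε ω)) ∂(Pq ε))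
        (𝓝[>] (0:ℝ)) (𝓝 (1 / (1 + A s))) := by
  have hIoc : ∀ᶠ ε in 𝓝[>] (0:ℝ), ε ∈ Ioc (0:ℝ) ε₀ := Ioc_mem_nhdsGT hε₀
  have hG := fun s L hs hL hD => G_limit hm ε₀ hε₀ η κ ζ Pstart hprob hmeas hκnn Q hMRP p hp hB π hπ
    hA1 hA2 hC s L hs hL hD
  have hG0 := hG 0 0 le_rfl le_rfl (by
    refine tendsto_const_nhds.congr' ?_
    filter_upwards [hπ] with ε hπ
    simp [lapPhi, hπ.2.1])
  have hh : ∀ i, Tendsto (fun ε => (Pstart ε i).real {ω | nu1 (ζ ε) ω = 0}) (𝓝[>] (0:ℝ)) (𝓝 0) := by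
    intro i
    have h1 := (hG0 i).const_sub 1
    simp only [GTr] at h1
    simpa using h1
  have hm1 : ∀ ε, Measurable (xi1 (κ ε) (ζ ε)) := fun ε =>
    measurable_xi1 (fun n => (hmeas ε n).2.1) (fun n => (hmeas ε n).2.2)
  have hΨ : ∀ s > 0, ∀ i, Tendsto (fun ε => ∫ ω, Real.exp (-(s * xiRE κ ζ ε ω)) ∂(Pstart ε i))
      (𝓝[>] (0:ℝ)) (𝓝 (1 / (1 + A s))) := by
    intro s hs i
    have h1 := (hG s (A s) hs.le (hApos s hs).le (hD s hs) i).add (hh i)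
    rw [add_zero] at h1
    refine h1.congr fun ε => ?_
    simp only [GTr, sub_add_cancel]
    rfl
  have hlim : ∀ s > 0, Tendsto (fun ε => ∫ ω, Real.exp (-(s * xiRE κ ζ ε ω)) ∂(Pq ε))
        (𝓝[>] (0:ℝ)) (𝓝 (1 / (1 + A s))) := by
    intro s hs
    have h1 : Tendsto (fun ε => ∑ i, |(∫ ω, Real.exp (-(s * xiRE κ ζ ε ω)) ∂(Pstart ε i)) -
        1 / (1 + A s)|) (𝓝[>] (0:ℝ)) (𝓝 0) := by
      have := tendsto_finsetSum Finset.univ (fun i _ => ((hΨ s hs i).sub_const (1 / (1 + A s))).abs)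
      simpa using this
    rw [tendsto_iff_dist_tendsto_zero]
    refine squeeze_zero' (Eventually.of_forall fun _ => dist_nonneg) ?_ h1
    filter_upwards [hIoc] with ε hε
    obtain ⟨hq0, hq1⟩ := hq ε hε
    have hint : ∀ i, Integrable (fun ω => Real.exp (-(s * xiRE κ ζ ε ω)))
        (ENNReal.ofReal (q ε i) • Pstart ε i) := fun i =>
      (integrable_exp_neg (hm1 ε) (xi1_nonneg (hκnn ε)) s hs.le).smul_measure ENNReal.ofReal_ne_top
    rw [hmix ε hε, integral_finsetSum_measure (fun i _ => hint i)]
    simp_rw [integral_smul_measure, ENNReal.toReal_ofReal (hq0 _), smul_eq_mul]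
    rw [Real.dist_eq]
    have e1 : ∑ i, q ε i * (∫ ω, Real.exp (-(s * xiRE κ ζ ε ω)) ∂(Pstart ε i)) - 1 / (1 + A s)
      = ∑ i, q ε i * ((∫ ω, Real.exp (-(s * xiRE κ ζ ε ω)) ∂(Pstart ε i)) - 1 / (1 + A s)) := by
      simp_rw [mul_sub]
      rw [Finset.sum_sub_distrib, ← Finset.sum_mul, hq1, one_mul]
    rw [e1]
    refine (Finset.abs_sum_le_sum_abs _ _).trans (Finset.sum_le_sum fun i _ => ?_)
    rw [abs_mul, abs_of_nonneg (hq0 i)]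
    have : q ε i ≤ 1 := by
      rw [← hq1]
      exact Finset.single_le_sum (f := q ε) (fun i _ => hq0 i) (Finset.mem_univ i)
    exact mul_le_of_le_one_left (abs_nonneg _) this
  have hPqprob : ∀ ε ∈ Ioc (0:ℝ) ε₀, IsProbabilityMeasure (Pq ε) := by
    intro ε hε
    obtain ⟨hq0, hq1⟩ := hq ε hε
    constructor
    rw [hmix ε hε]
    simp [Measure.finsetSum_apply]
    rw [← ENNReal.ofReal_sum_of_nonneg (fun i _ => hq0 i), hq1, ENNReal.ofReal_one]
  let u : ℕ → ℝ := fun n => ε₀ / ((n:ℝ) + 1)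
  have hu : ∀ n, u n ∈ Ioc (0:ℝ) ε₀ := by
    intro n
    refine ⟨by positivity, ?_⟩
    apply div_le_self hε₀.le
    have : (0:ℝ) ≤ n := Nat.cast_nonneg n
    linarith
  have hulim : Tendsto u atTop (𝓝[>] (0:ℝ)) := by
    rw [tendsto_nhdsWithin_iff]
    refine ⟨?_, Eventually.of_forall fun n => (hu n).1⟩
    have := (tendsto_one_div_add_atTop_nhds_zero_nat (𝕜 := ℝ)).const_mul ε₀
    rw [mul_zero] at this
    refine this.congr fun n => ?_
    simp only [u]
    ring
  obtain ⟨μ, h1, h2, h3⟩ := laplace_continuity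
    (fun n => (Pq (u n)).map (xi1 (κ (u n)) (ζ (u n))))
    (fun n => by
      have := hPqprob (u n) (hu n)
      exact Measure.isProbabilityMeasure_map (hm1 _).aemeasurable)
    (fun n => by
      rw [ae_map_iff (hm1 _).aemeasurable measurableSet_Ici]
      exact Eventually.of_forall fun ω => xi1_nonneg (hκnn _) ω)
    (fun s => 1 / (1 + A s))
    (fun s hs => by
      refine ((hlim s hs).comp hulim).congr fun n => ?_
      rw [integral_map (hm1 _).aemeasurable (by apply Continuous.aestronglyMeasurable; fun_prop)]
      rfl)
    (by
      have := (hA0.const_add 1).inv₀ (by norm_num)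
      simpa [one_div] using this)
  exact ⟨μ, h1, h2, h3, hlim⟩
end
end

section
/- Let conditions A, B and C hold, and set v_ε = p_ε^{−1}. Suppose that for some family of initial distributions q̄_ε the first-rare-event times ξ_ε converge in distribution as ε → 0 to a nonnegative random variable ξ₀ whose distribution is not concentrated at zero. Then condition D₁ holds: A(s) = lim_{ε→0} v_ε(1 − φ_ε(s)) exists for every s > 0, with A(s) > 0 for s > 0 and A(s) → 0 as s → 0+, and moreover E e^{−sξ₀} = 1/(1 + A(s)) for s ≥ 0. -/
open MeasureTheory Filter Set
open scoped Topology ENNReal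

noncomputable section

/-- A Markov renewal process at a fixed value of the parameter. -/
structure IsMRP {m : ℕ} {Ω : Type} [MeasurableSpace Ω]
    (η : ℕ → Ω → Fin m) (κ : ℕ → Ω → ℝ) (ζ : ℕ → Ω → Bool)
    (P : Fin m → Measure Ω) (Q : Fin m → Fin m → ℝ → Bool → ℝ) : Prop where
  prob : ∀ i, IsProbabilityMeasure (P i)
  mη : ∀ n, Measurable (η n)
  mκ : ∀ n, Measurable (κ n)
  mζ : ∀ n, Measurable (ζ n)
  nn : ∀ n ω, 0 ≤ κ n ω
  law : ∀ n : ℕ, ∀ I : ℕ → Fin m, ∀ T : ℕ → ℝ, ∀ Z : ℕ → Bool,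
      P (I 0) {ω | ∀ k ≤ n, (η k ω = I k ∧ (1 ≤ k → (κ k ω ≤ T k ∧ ζ k ω = Z k)))}
        = ENNReal.ofReal (∏ k ∈ Finset.Icc 1 n, Q (I (k - 1)) (I k) (T k) (Z k))

namespace IsMRP

variable {m : ℕ} {Ω : Type} [MeasurableSpace Ω]
    {η : ℕ → Ω → Fin m} {κ : ℕ → Ω → ℝ} {ζ : ℕ → Ω → Bool}
    {P : Fin m → Measure Ω} {Q : Fin m → Fin m → ℝ → Bool → ℝ}

/-- one-step sub-probability law of the sojourn time -/
def K (η : ℕ → Ω → Fin m) (κ : ℕ → Ω → ℝ) (ζ : ℕ → Ω → Bool)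
    (P : Fin m → Measure Ω) (i j : Fin m) (z : Bool) : Measure ℝ :=
  Measure.map (κ 1) ((P i).restrict {ω | η 1 ω = j ∧ ζ 1 ω = z})

/-- cylinder event in the discrete components -/
def E (η : ℕ → Ω → Fin m) (ζ : ℕ → Ω → Bool) (n : ℕ) (I : ℕ → Fin m) (Z : ℕ → Bool) : Set Ω :=
  {ω | ∀ k ≤ n, η k ω = I k ∧ (1 ≤ k → ζ k ω = Z k)}

lemma measE (h : IsMRP η κ ζ P Q) (n : ℕ) (I : ℕ → Fin m) (Z : ℕ → Bool) :
    MeasurableSet (E η ζ n I Z) := by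
  have : E η ζ n I Z = ⋂ k, ⋂ (_ : k ≤ n), ({ω | η k ω = I k} ∩ ⋂ (_ : 1 ≤ k), {ω | ζ k ω = Z k}) := by
    ext ω; simp [E]
  rw [this]
  refine MeasurableSet.iInter fun k => MeasurableSet.iInter fun _ => MeasurableSet.inter ?_ (MeasurableSet.iInter fun _ => ?_)
  · exact h.mη k (measurableSet_singleton _)
  · exact h.mζ k (measurableSet_singleton _)

lemma meas1 (h : IsMRP η κ ζ P Q) (n : ℕ) (j : Fin m) (z : Bool) :
    MeasurableSet {ω | η n ω = j ∧ ζ n ω = z} :=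
  (h.mη n (measurableSet_singleton j)).inter (h.mζ n (measurableSet_singleton z))

lemma law' (h : IsMRP η κ ζ P Q) (n : ℕ) (I : ℕ → Fin m) (T : ℕ → ℝ) (Z : ℕ → Bool) :
    P (I 0) {ω | ∀ k ≤ n, (η k ω = I k ∧ (1 ≤ k → (κ k ω ≤ T k ∧ ζ k ω = Z k)))}
        = ∏ k ∈ Finset.Icc 1 n, ENNReal.ofReal (Q (I (k - 1)) (I k) (T k) (Z k)) := by
  induction n with
  | zero => rw [h.law]; simp
  | succ n ih =>
    have h1 := h.law n I T Z
    rw [Finset.prod_Icc_succ_top (by omega), ← ih]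
    by_cases hR : 0 ≤ ∏ k ∈ Finset.Icc 1 n, Q (I (k - 1)) (I k) (T k) (Z k)
    · rw [h1, h.law, Finset.prod_Icc_succ_top (by omega), ENNReal.ofReal_mul hR]
    · rw [ENNReal.ofReal_of_nonpos (le_of_not_ge hR)] at h1
      rw [h1, zero_mul]
      refine measure_mono_null ?_ h1
      intro ω hω k hk
      exact hω k (by omega)

lemma ae0 (h : IsMRP η κ ζ P Q) (i : Fin m) : ∀ᵐ ω ∂(P i), η 0 ω = i := by
  have := h.prob i
  have h1 := h.law 0 (fun _ => i) (fun _ => 0) (fun _ => true)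
  have h2 : {ω | ∀ k ≤ 0, (η k ω = i ∧ (1 ≤ k → (κ k ω ≤ 0 ∧ ζ k ω = true)))} = {ω | η 0 ω = i} := by
    ext ω; simp
  rw [h2] at h1
  simp only [Finset.Icc_eq_empty_of_lt Nat.zero_lt_one, Finset.prod_empty, ENNReal.ofReal_one] at h1
  exact (prob_compl_eq_zero_iff (h.mη 0 (measurableSet_singleton i))).2 h1

lemma K_Iic (h : IsMRP η κ ζ P Q) (i j : Fin m) (z : Bool) (t : ℝ) :
    K η κ ζ P i j z (Iic t) = ENNReal.ofReal (Q i j t z) := by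
  have h1 := h.law 1 (fun k => if k = 0 then i else j) (fun _ => t) (fun _ => z)
  simp only [Finset.Icc_self, Finset.prod_singleton] at h1
  simp only [if_true, one_ne_zero, if_false] at h1
  rw [← h1, K, Measure.map_apply (h.mκ 1) measurableSet_Iic,
    Measure.restrict_apply (h.mκ 1 measurableSet_Iic)]
  apply measure_congr
  filter_upwards [h.ae0 i] with ω hω
  apply propext
  change (κ 1 ω ≤ t ∧ (η 1 ω = j ∧ ζ 1 ω = z)) ↔ _
  constructor
  · rintro ⟨h1, h2, h3⟩ k hk
    interval_cases k
    · simp [hω]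
    · simp [h1, h2, h3]
  · intro hh
    have := hh 1 le_rfl
    simp at this
    tauto

instance finK [hP : ∀ i, IsProbabilityMeasure (P i)] (i j : Fin m) (z : Bool) :
    IsFiniteMeasure (K η κ ζ P i j z) := by
  unfold K; infer_instance

lemma map_pi (h : IsMRP η κ ζ P Q) (n : ℕ) (I : ℕ → Fin m) (Z : ℕ → Bool) :
    Measure.pi (fun k : Fin n => K η κ ζ P (I k) (I (k + 1)) (Z (k + 1))) =
    Measure.map (fun ω (k : Fin n) => κ (k + 1) ω) ((P (I 0)).restrict (E η ζ n I Z)) := by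
  have := h.prob
  have hm : Measurable (fun ω (k : Fin n) => κ (k + 1) ω) :=
    measurable_pi_lambda _ fun k => h.mκ _
  refine Measure.pi_eq_generateFrom (C := fun _ => range Iic)
    (fun _ => (borel_eq_generateFrom_Iic ℝ).symm.trans BorelSpace.measurable_eq.symm) (fun _ => isPiSystem_Iic) (fun k =>
      ⟨fun N => Iic (N : ℝ), fun N => ⟨_, rfl⟩, fun N => measure_lt_top _ _, ?_⟩) ?_
  · rw [iUnion_eq_univ_iff]
    intro x
    obtain ⟨N, hN⟩ := exists_nat_ge x
    exact ⟨N, hN⟩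
  · intro s hs
    choose T hT using hs
    have hs' : s = fun k => Iic (T k) := by funext k; exact (hT k).symm
    subst hs'
    rw [Measure.map_apply hm (MeasurableSet.univ_pi fun _ => measurableSet_Iic),
      Measure.restrict_apply (hm (MeasurableSet.univ_pi fun _ => measurableSet_Iic))]
    simp only [h.K_Iic]
    let T' : ℕ → ℝ := fun k => if hk : k - 1 < n then T ⟨k - 1, hk⟩ else 0
    have h1 := h.law' n I T' Z
    have h2 : ∏ k ∈ Finset.Icc 1 n, ENNReal.ofReal (Q (I (k - 1)) (I k) (T' k) (Z k))
        = ∏ i : Fin n, ENNReal.ofReal (Q (I i) (I (i + 1)) (T i) (Z (i + 1))) := by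
      have h3 : ∏ i : Fin n, ENNReal.ofReal (Q (I i) (I (i + 1)) (T i) (Z (i + 1))) =
          ∏ i : Fin n, ENNReal.ofReal (Q (I i) (I (i + 1)) (T' (i + 1)) (Z (i + 1))) := by
        apply Finset.prod_congr rfl
        intro i _
        simp [T']
      rw [h3, ← Finset.prod_range
        (fun i => ENNReal.ofReal (Q (I i) (I (i + 1)) (T' (i + 1)) (Z (i + 1)))),
        Finset.range_eq_Ico]
      exact (Finset.prod_Ico_add'
          (fun k => ENNReal.ofReal (Q (I (k - 1)) (I k) (T' k) (Z k))) 0 n 1).symm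
    rw [← h2, ← h1]
    congr 1
    ext ω
    simp only [mem_inter_iff, mem_preimage, Set.mem_pi, mem_univ, true_imp_iff, mem_Iic, E, mem_ofPred_eq]
    constructor
    · rintro ⟨ha, hb⟩ k hk
      refine ⟨(hb k hk).1, fun hk1 => ⟨?_, (hb k hk).2 hk1⟩⟩
      have hlt : k - 1 < n := by omega
      have := ha ⟨k - 1, hlt⟩
      simp only [Nat.sub_add_cancel hk1] at this
      simpa [T', hlt] using this
    · intro hh
      refine ⟨fun k => ?_, fun k hk => ⟨(hh k hk).1, fun h1 => ((hh k hk).2 h1).2⟩⟩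
      have := ((hh (k + 1) (by omega)).2 (by omega)).1
      simpa [T'] using this

/-- sum of the first sojourn times -/
def S (κ : ℕ → Ω → ℝ) (n : ℕ) (ω : Ω) : ℝ := ∑ k ∈ Finset.Icc 1 n, κ k ω

lemma integral_E (h : IsMRP η κ ζ P Q) (s : ℝ) (n : ℕ) (I : ℕ → Fin m) (Z : ℕ → Bool) :
    ∫ ω in E η ζ n I Z, Real.exp (-(s * S κ n ω)) ∂(P (I 0)) =
      ∏ k : Fin n, ∫ x, Real.exp (-(s * x)) ∂(K η κ ζ P (I k) (I (k + 1)) (Z (k + 1))) := by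
  have := h.prob
  have hm : Measurable (fun ω (k : Fin n) => κ (k + 1) ω) :=
    measurable_pi_lambda _ fun k => h.mκ _
  rw [← integral_fintype_prod_eq_prod (fun (_ : Fin n) x => Real.exp (-(s * x))), h.map_pi,
    integral_map hm.aemeasurable (by
      apply Measurable.aestronglyMeasurable
      fun_prop)]
  congr 1
  funext ω
  rw [← Real.exp_sum, S, Finset.sum_neg_distrib, ← Finset.mul_sum,
    ← Finset.sum_range (fun k => κ (k + 1) ω), Finset.range_eq_Ico,
    Finset.sum_Ico_add' (fun k => κ k ω) 0 n 1]
  rfl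

/-- one-step transforms -/
def cc (η : ℕ → Ω → Fin m) (κ : ℕ → Ω → ℝ) (ζ : ℕ → Ω → Bool)
    (P : Fin m → Measure Ω) (s : ℝ) (z : Bool) (i j : Fin m) : ℝ :=
  ∫ ω in {ω | η 1 ω = j ∧ ζ 1 ω = z}, Real.exp (-(s * κ 1 ω)) ∂(P i)

lemma integral_E_succ (h : IsMRP η κ ζ P Q) (s : ℝ) (n : ℕ) (I : ℕ → Fin m) (Z : ℕ → Bool) :
    ∫ ω in E η ζ (n + 1) I Z, Real.exp (-(s * S κ (n + 1) ω)) ∂(P (I 0)) =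
      (∫ ω in E η ζ n I Z, Real.exp (-(s * S κ n ω)) ∂(P (I 0))) *
        cc η κ ζ P s (Z (n + 1)) (I n) (I (n + 1)) := by
  rw [h.integral_E, h.integral_E, Fin.prod_univ_castSucc]
  congr 1
  rw [K, integral_map (h.mκ 1).aemeasurable (by
      apply Measurable.aestronglyMeasurable
      fun_prop)]
  rfl

lemma S_nonneg (h : IsMRP η κ ζ P Q) (n : ℕ) (ω : Ω) : 0 ≤ S κ n ω :=
  Finset.sum_nonneg fun k _ => h.nn k ω

lemma meas_S (h : IsMRP η κ ζ P Q) (n : ℕ) : Measurable (S κ n) :=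
  Finset.measurable_fun_sum _ fun k _ => h.mκ k

lemma exp_le {s x : ℝ} (hs : 0 ≤ s) (hx : 0 ≤ x) : Real.exp (-(s * x)) ≤ 1 := by
  rw [Real.exp_le_one_iff]; nlinarith [mul_nonneg hs hx]

lemma int_S (h : IsMRP η κ ζ P Q) {s : ℝ} (hs : 0 ≤ s) (n : ℕ) (i : Fin m) :
    Integrable (fun ω => Real.exp (-(s * S κ n ω))) (P i) := by
  have := h.prob i
  refine Integrable.of_bound (C := 1) ?_ ?_
  · have := h.meas_S n
    exact (by fun_prop : Measurable (fun ω => Real.exp (-(s * S κ n ω)))).aestronglyMeasurable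
  · refine Eventually.of_forall fun ω => ?_
    rw [Real.norm_eq_abs, abs_of_pos (Real.exp_pos _)]
    exact exp_le hs (h.S_nonneg n ω)

lemma path_split (h : IsMRP η κ ζ P Q) (n : ℕ) (i : Fin m) (B : Set Ω) (hB : MeasurableSet B)
    (f : Ω → ℝ) (hf : Integrable f (P i)) :
    ∫ ω in B, f ω ∂(P i) = ∑ J : Fin n → Fin m,
      ∫ ω in B ∩ {ω | ∀ k : Fin n, η (k + 1) ω = J k}, f ω ∂(P i) := by
  rw [← integral_iUnion_fintype]
  · congr 2
    ext ω
    simp only [mem_iUnion, mem_inter_iff, mem_ofPred_eq]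
    exact ⟨fun hω => ⟨fun k => η (k + 1) ω, hω, fun _ => rfl⟩, fun ⟨_, hω, _⟩ => hω⟩
  · intro J
    refine hB.inter ?_
    have : {ω | ∀ k : Fin n, η (k + 1) ω = J k} = ⋂ k : Fin n, {ω | η (k + 1) ω = J k} := by
      ext; simp
    rw [this]
    exact MeasurableSet.iInter fun k => h.mη _ (measurableSet_singleton _)
  · intro J J' hne
    refine Set.disjoint_left.2 fun ω h1 h2 => hne ?_
    funext k
    exact (h1.2 k).symm.trans (h2.2 k)
  · intro J
    exact hf.integrableOn

/-- extension of a finite path -/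
def ext (i j : Fin m) (n : ℕ) (J : Fin n → Fin m) (k : ℕ) : Fin m :=
  if k = 0 then i else if hk : k - 1 < n then J ⟨k - 1, hk⟩ else j

/-- event that the chain is at `l` at step `n` and the flags follow `Z` -/
def G (η : ℕ → Ω → Fin m) (ζ : ℕ → Ω → Bool) (n : ℕ) (l : Fin m) (Z : ℕ → Bool) : Set Ω :=
  {ω | η n ω = l ∧ ∀ k, 1 ≤ k → k ≤ n → ζ k ω = Z k}

lemma measG (h : IsMRP η κ ζ P Q) (n : ℕ) (l : Fin m) (Z : ℕ → Bool) :
    MeasurableSet (G η ζ n l Z) := by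
  have : G η ζ n l Z = {ω | η n ω = l} ∩ ⋂ k, ⋂ (_ : 1 ≤ k), ⋂ (_ : k ≤ n), {ω | ζ k ω = Z k} := by
    ext ω; simp [G]
  rw [this]
  exact (h.mη n (measurableSet_singleton l)).inter
    (MeasurableSet.iInter fun k => MeasurableSet.iInter fun _ => MeasurableSet.iInter fun _ =>
      h.mζ k (measurableSet_singleton _))

/-- restricted transform -/
def W (η : ℕ → Ω → Fin m) (κ : ℕ → Ω → ℝ) (ζ : ℕ → Ω → Bool)
    (P : Fin m → Measure Ω) (s : ℝ) (n : ℕ) (i l : Fin m) (Z : ℕ → Bool) : ℝ :=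
  ∫ ω in G η ζ n l Z, Real.exp (-(s * S κ n ω)) ∂(P i)

lemma W_congr (s : ℝ) (n : ℕ) (i l : Fin m) (Z Z' : ℕ → Bool) (hZ : ∀ k ≤ n, Z k = Z' k) :
    W η κ ζ P s n i l Z = W η κ ζ P s n i l Z' := by
  have : G η ζ n l Z = G η ζ n l Z' := by
    ext ω
    simp only [G, mem_ofPred_eq]
    refine and_congr_right fun _ => forall_congr' fun k => imp_congr_right fun _ =>
      imp_congr_right fun hk => by rw [hZ k hk]
  rw [W, W, this]

lemma ext_eq {i j : Fin m} {n : ℕ} {J : Fin n → Fin m} {ω : Ω} (h0 : η 0 ω = i)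
    (hJ : ∀ k : Fin n, η (k + 1) ω = J k) {k : ℕ} (hk : k ≤ n) : η k ω = ext i j n J k := by
  unfold ext
  split_ifs with h1 h2
  · rw [h1]; exact h0
  · have := hJ ⟨k - 1, h2⟩
    rw [← this]
    congr 1
    simp; omega
  · omega

lemma ext_top (i j : Fin m) (n : ℕ) (J : Fin n → Fin m) : ext i j n J (n + 1) = j := by
  simp [ext]

lemma of_ext {i j : Fin m} {n : ℕ} {J : Fin n → Fin m} {ω : Ω}
    (hω : ∀ k ≤ n, η k ω = ext i j n J k) (k : Fin n) : η (k + 1) ω = J k := by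
  rw [hω (k + 1) (by omega)]
  simp [ext]

lemma W_path (h : IsMRP η κ ζ P Q) {s : ℝ} (hs : 0 ≤ s) (n : ℕ) (i j l : Fin m) (Z : ℕ → Bool) :
    W η κ ζ P s n i l Z = ∑ J : Fin n → Fin m, if ext i j n J n = l then
      ∫ ω in E η ζ n (ext i j n J) Z, Real.exp (-(s * S κ n ω)) ∂(P i) else 0 := by
  rw [W, h.path_split n i _ (h.measG n l Z) _ (h.int_S hs n i)]
  refine Finset.sum_congr rfl fun J _ => ?_
  split_ifs with hl
  · apply setIntegral_congr_set
    filter_upwards [h.ae0 i] with ω hω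
    apply propext
    change ((η n ω = l ∧ ∀ k, 1 ≤ k → k ≤ n → ζ k ω = Z k) ∧ (∀ k : Fin n, η (k + 1) ω = J k)) ↔
      ∀ k ≤ n, η k ω = ext i j n J k ∧ (1 ≤ k → ζ k ω = Z k)
    constructor
    · rintro ⟨⟨h1, h2⟩, h3⟩ k hk
      exact ⟨ext_eq hω h3 hk, fun h1 => h2 k h1 hk⟩
    · intro hh
      exact ⟨⟨(hh n le_rfl).1.trans hl, fun k h1 hk => (hh k hk).2 h1⟩,
        of_ext fun k hk => (hh k hk).1⟩
  · rw [← setIntegral_empty (μ := P i) (f := fun ω => Real.exp (-(s * S κ n ω)))]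
    apply setIntegral_congr_set
    filter_upwards [h.ae0 i] with ω hω
    apply propext
    change ((η n ω = l ∧ ∀ k, 1 ≤ k → k ≤ n → ζ k ω = Z k) ∧ (∀ k : Fin n, η (k + 1) ω = J k)) ↔
      False
    refine ⟨?_, False.elim⟩
    rintro ⟨⟨h1, h2⟩, h3⟩
    exact hl ((ext_eq hω h3 le_rfl).symm.trans h1)

lemma W_path_succ (h : IsMRP η κ ζ P Q) {s : ℝ} (hs : 0 ≤ s) (n : ℕ) (i j : Fin m)
    (Z : ℕ → Bool) :
    W η κ ζ P s (n + 1) i j Z = ∑ J : Fin n → Fin m,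
      ∫ ω in E η ζ (n + 1) (ext i j n J) Z, Real.exp (-(s * S κ (n + 1) ω)) ∂(P i) := by
  rw [W, h.path_split n i _ (h.measG _ _ Z) _ (h.int_S hs _ i)]
  refine Finset.sum_congr rfl fun J _ => ?_
  apply setIntegral_congr_set
  filter_upwards [h.ae0 i] with ω hω
  apply propext
  change ((η (n + 1) ω = j ∧ ∀ k, 1 ≤ k → k ≤ n + 1 → ζ k ω = Z k) ∧
    (∀ k : Fin n, η (k + 1) ω = J k)) ↔
    ∀ k ≤ n + 1, η k ω = ext i j n J k ∧ (1 ≤ k → ζ k ω = Z k)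
  constructor
  · rintro ⟨⟨h1, h2⟩, h3⟩ k hk
    refine ⟨?_, fun h1 => h2 k h1 hk⟩
    rcases Nat.lt_or_ge n k with h4 | h4
    · have : k = n + 1 := by omega
      subst this
      rw [ext_top, h1]
    · exact ext_eq hω h3 h4
  · intro hh
    exact ⟨⟨(hh (n + 1) le_rfl).1.trans (ext_top _ _ _ _), fun k h1 hk => (hh k hk).2 h1⟩,
      of_ext fun k hk => (hh k (by omega)).1⟩

lemma W_succ (h : IsMRP η κ ζ P Q) {s : ℝ} (hs : 0 ≤ s) (n : ℕ) (i j : Fin m)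
    (Z : ℕ → Bool) :
    W η κ ζ P s (n + 1) i j Z =
      ∑ l, W η κ ζ P s n i l Z * cc η κ ζ P s (Z (n + 1)) l j := by
  rw [h.W_path_succ hs]
  simp_rw [h.W_path hs n i j, Finset.sum_mul]
  rw [Finset.sum_comm]
  refine Finset.sum_congr rfl fun J _ => ?_
  simp only [ite_mul, zero_mul]
  rw [Finset.sum_ite_eq]
  have := h.integral_E_succ s n (ext i j n J) Z
  rw [ext_top] at this
  simpa [ext] using this

lemma W_zero (h : IsMRP η κ ζ P Q) (s : ℝ) (i l : Fin m) (Z : ℕ → Bool) :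
    W η κ ζ P s 0 i l Z = if i = l then 1 else 0 := by
  have := h.prob i
  have h1 : W η κ ζ P s 0 i l Z = ∫ ω in {_ω : Ω | i = l}, (1 : ℝ) ∂(P i) := by
    have : ∀ ω, Real.exp (-(s * S κ 0 ω)) = 1 := by intro ω; simp [S]
    simp only [W, this]
    apply setIntegral_congr_set
    filter_upwards [h.ae0 i] with ω hω
    apply propext
    change (η 0 ω = l ∧ ∀ k, 1 ≤ k → k ≤ 0 → ζ k ω = Z k) ↔ i = l
    rw [hω]
    exact ⟨fun h => h.1, fun h => ⟨h, fun k h1 h2 => by omega⟩⟩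
  rw [h1]
  split_ifs with hil
  · subst hil; simp
  · simp [hil]

lemma W_pow (h : IsMRP η κ ζ P Q) {s : ℝ} (hs : 0 ≤ s) (n : ℕ) (i j : Fin m) :
    W η κ ζ P s n i j (fun _ => false) = (Matrix.of (cc η κ ζ P s false) ^ n) i j := by
  induction n generalizing j with
  | zero => rw [h.W_zero]; simp [Matrix.one_apply]
  | succ n ih =>
    rw [h.W_succ hs, pow_succ, Matrix.mul_apply]
    exact Finset.sum_congr rfl fun l _ => by rw [ih]; rfl

/-- the first rare event happens at step `n + 1` -/
def R (ζ : ℕ → Ω → Bool) (n : ℕ) : Set Ω :=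
  {ω | (∀ k, 1 ≤ k → k ≤ n → ζ k ω = false) ∧ ζ (n + 1) ω = true}

/-- transform of the sojourn time on a rare event -/
def bb (η : ℕ → Ω → Fin m) (κ : ℕ → Ω → ℝ) (ζ : ℕ → Ω → Bool)
    (P : Fin m → Measure Ω) (s : ℝ) (i : Fin m) : ℝ := ∑ j, cc η κ ζ P s true i j

lemma measR (h : IsMRP η κ ζ P Q) (n : ℕ) : MeasurableSet (R ζ n) := by
  have : R ζ n = (⋂ k, ⋂ (_ : 1 ≤ k), ⋂ (_ : k ≤ n), {ω | ζ k ω = false}) ∩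
      {ω | ζ (n + 1) ω = true} := by
    ext ω; simp [R]
  rw [this]
  exact (MeasurableSet.iInter fun k => MeasurableSet.iInter fun _ => MeasurableSet.iInter fun _ =>
      h.mζ k (measurableSet_singleton _)).inter (h.mζ _ (measurableSet_singleton _))

lemma integral_R (h : IsMRP η κ ζ P Q) {s : ℝ} (hs : 0 ≤ s) (n : ℕ) (i : Fin m) :
    ∫ ω in R ζ n, Real.exp (-(s * S κ (n + 1) ω)) ∂(P i) =
      ∑ l, (Matrix.of (cc η κ ζ P s false) ^ n) i l * bb η κ ζ P s l := by
  let Z : ℕ → Bool := fun k => decide (k = n + 1)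
  have hR : R ζ n = ⋃ j, G η ζ (n + 1) j Z := by
    ext ω
    simp only [R, G, mem_iUnion, mem_ofPred_eq, exists_eq_left']
    constructor
    · rintro ⟨h1, h2⟩ k hk hk2
      by_cases hkn : k = n + 1
      · subst hkn; simp [Z, h2]
      · rw [h1 k hk (by omega)]; simp [Z, hkn]
    · intro hh
      refine ⟨fun k hk hk2 => ?_, ?_⟩
      · rw [hh k hk (by omega)]; simp [Z]; omega
      · rw [hh _ (by omega) le_rfl]; simp [Z]
  rw [hR, integral_iUnion_fintype (fun j => h.measG _ _ _) ?_ (fun j => (h.int_S hs _ i).integrableOn)]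
  · change ∑ j, W η κ ζ P s (n + 1) i j Z = _
    simp_rw [h.W_succ hs, bb, Finset.mul_sum]
    rw [Finset.sum_comm]
    refine Finset.sum_congr rfl fun l _ => Finset.sum_congr rfl fun j _ => ?_
    rw [← h.W_pow hs, W_congr s n i l Z (fun _ => false) (fun k hk => by simp [Z]; omega)]
    simp [Z]
  · intro j j' hne
    exact Set.disjoint_left.2 fun ω h1 h2 => hne (h1.1.symm.trans h2.1)

/-- number of steps to the first rare event -/
def nu (ζ : ℕ → Ω → Bool) (ω : Ω) : ℕ := sInf {n : ℕ | 1 ≤ n ∧ ζ n ω = true}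

lemma nu_R {n : ℕ} {ω : Ω} (hω : ω ∈ R ζ n) : nu ζ ω = n + 1 := by
  unfold nu
  apply le_antisymm
  · exact Nat.sInf_le ⟨by omega, hω.2⟩
  · refine le_csInf ⟨n + 1, by omega, hω.2⟩ ?_
    rintro k ⟨h1, h2⟩
    by_contra hk
    have := hω.1 k h1 (by omega)
    rw [h2] at this
    exact absurd this (by simp)

/-- Laplace transform of the first rare event time (on the event that it is finite) -/
def FF (κ : ℕ → Ω → ℝ) (ζ : ℕ → Ω → Bool)
    (P : Fin m → Measure Ω) (s : ℝ) (i : Fin m) : ℝ :=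
  ∫ ω in ⋃ n, R ζ n, Real.exp (-(s * S κ (nu ζ ω) ω)) ∂(P i)

lemma FF_int (h : IsMRP η κ ζ P Q) {s : ℝ} (hs : 0 ≤ s) (i : Fin m) :
    IntegrableOn (fun ω => Real.exp (-(s * S κ (nu ζ ω) ω))) (⋃ n, R ζ n) (P i) := by
  have := h.prob i
  refine Integrable.of_bound (C := 1) ?_ ?_
  · rw [aestronglyMeasurable_iUnion_iff]
    intro n
    have h2 := (h.int_S hs (n + 1) i).aestronglyMeasurable.restrict (s := R ζ n)
    refine h2.congr ?_
    filter_upwards [ae_restrict_mem (h.measR n)] with ω hω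
    simp only [nu_R hω]
  · refine Eventually.of_forall fun ω => ?_
    rw [Real.norm_eq_abs, abs_of_pos (Real.exp_pos _)]
    exact exp_le hs (h.S_nonneg _ ω)

lemma FF_hasSum (h : IsMRP η κ ζ P Q) {s : ℝ} (hs : 0 ≤ s) (i : Fin m) :
    HasSum (fun n => ∑ l, (Matrix.of (cc η κ ζ P s false) ^ n) i l * bb η κ ζ P s l)
      (FF κ ζ P s i) := by
  have := h.prob i
  have h1 := hasSum_integral_iUnion (μ := P i) (f := fun ω => Real.exp (-(s * S κ (nu ζ ω) ω)))
    (s := R ζ) (fun n => h.measR n) ?_ ?_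
  · have h2 : (fun n => ∑ l, (Matrix.of (cc η κ ζ P s false) ^ n) i l * bb η κ ζ P s l) =
        fun n => ∫ ω in R ζ n, Real.exp (-(s * S κ (nu ζ ω) ω)) ∂(P i) := by
      funext n
      rw [← h.integral_R hs]
      refine setIntegral_congr_fun (h.measR n) fun ω hω => ?_
      simp only [nu_R hω]
    rw [h2]
    exact h1
  · intro n n' hne
    refine Set.disjoint_left.2 fun ω h1 h2 => hne ?_
    have := (nu_R h1).symm.trans (nu_R h2)
    omega
  · exact h.FF_int hs i

lemma FF_eq (h : IsMRP η κ ζ P Q) {s : ℝ} (hs : 0 ≤ s) (i : Fin m) :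
    FF κ ζ P s i = bb η κ ζ P s i + ∑ j, cc η κ ζ P s false i j * FF κ ζ P s j := by
  have h1 := (h.FF_hasSum hs i)
  rw [← hasSum_nat_add_iff' 1] at h1
  have h2 : HasSum (fun n => ∑ j, cc η κ ζ P s false i j *
      ∑ l, (Matrix.of (cc η κ ζ P s false) ^ n) j l * bb η κ ζ P s l)
      (∑ j, cc η κ ζ P s false i j * FF κ ζ P s j) :=
    hasSum_sum fun j _ => (h.FF_hasSum hs j).mul_left _
  have h4 : (fun n => ∑ l, (Matrix.of (cc η κ ζ P s false) ^ (n + 1)) i l * bb η κ ζ P s l) =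
      fun n => ∑ j, cc η κ ζ P s false i j *
      ∑ l, (Matrix.of (cc η κ ζ P s false) ^ n) j l * bb η κ ζ P s l := by
    funext n
    simp_rw [pow_succ', Matrix.mul_apply, Finset.sum_mul, Finset.mul_sum]
    rw [Finset.sum_comm]
    simp [mul_assoc]
  rw [h4] at h1
  have h3 := h1.unique h2
  simp [Matrix.one_apply] at h3
  linarith

lemma FF_nonneg (s : ℝ) (i : Fin m) : 0 ≤ FF κ ζ P s i :=
  integral_nonneg fun _ => (Real.exp_pos _).le

lemma FF_le_one (h : IsMRP η κ ζ P Q) {s : ℝ} (hs : 0 ≤ s) (i : Fin m) : FF κ ζ P s i ≤ 1 := by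
  have := h.prob i
  unfold FF
  refine (Real.le_norm_self _).trans ((norm_setIntegral_le_of_norm_le_const (C := 1)
    (measure_lt_top _ _) fun ω _ => ?_).trans ?_)
  · rw [Real.norm_eq_abs, abs_of_pos (Real.exp_pos _)]
    exact exp_le hs (h.S_nonneg _ ω)
  · rw [one_mul]; exact measureReal_le_one

lemma ae_R (h : IsMRP η κ ζ P Q) (i : Fin m) (h1 : FF κ ζ P 0 i = 1) :
    ∀ᵐ ω ∂(P i), ω ∈ ⋃ n, R ζ n := by
  have := h.prob i
  have h2 : (P i) (⋃ n, R ζ n) = 1 := by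
    simp [FF, measureReal_def] at h1
    exact (ENNReal.toReal_eq_one_iff _).1 h1
  exact (prob_compl_eq_zero_iff (MeasurableSet.iUnion h.measR)).2 h2

lemma FF_eq_integral (h : IsMRP η κ ζ P Q) {s : ℝ} (i : Fin m) (h1 : FF κ ζ P 0 i = 1) :
    FF κ ζ P s i = ∫ ω, Real.exp (-(s * S κ (nu ζ ω) ω)) ∂(P i) := by
  rw [FF, Measure.restrict_eq_self_of_ae_mem (h.ae_R i h1)]

lemma int_xi (h : IsMRP η κ ζ P Q) {s : ℝ} (hs : 0 ≤ s) (i : Fin m) (h1 : FF κ ζ P 0 i = 1) :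
    Integrable (fun ω => Real.exp (-(s * S κ (nu ζ ω) ω))) (P i) := by
  have := h.FF_int hs i
  rwa [IntegrableOn, Measure.restrict_eq_self_of_ae_mem (h.ae_R i h1)] at this

lemma int1 (h : IsMRP η κ ζ P Q) {s : ℝ} (hs : 0 ≤ s) (i : Fin m) :
    Integrable (fun ω => Real.exp (-(s * κ 1 ω))) (P i) := by
  have := h.int_S hs 1 i
  simpa [S] using this

lemma cc_nonneg (s : ℝ) (z : Bool) (i j : Fin m) : 0 ≤ cc η κ ζ P s z i j :=
  integral_nonneg fun _ => (Real.exp_pos _).le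

lemma cc_le (h : IsMRP η κ ζ P Q) {s : ℝ} (hs : 0 ≤ s) (z : Bool) (i j : Fin m) :
    cc η κ ζ P s z i j ≤ cc η κ ζ P 0 z i j := by
  refine setIntegral_mono (h.int1 hs i).integrableOn (h.int1 le_rfl i).integrableOn fun ω => ?_
  simpa using mul_nonneg hs (h.nn 1 ω)

lemma meas_z (h : IsMRP η κ ζ P Q) (z : Bool) : MeasurableSet {ω | ζ 1 ω = z} :=
  h.mζ 1 (measurableSet_singleton z)

lemma sum_cc (h : IsMRP η κ ζ P Q) {s : ℝ} (hs : 0 ≤ s) (z : Bool) (i : Fin m) :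
    ∑ j, cc η κ ζ P s z i j = ∫ ω in {ω | ζ 1 ω = z}, Real.exp (-(s * κ 1 ω)) ∂(P i) := by
  unfold cc
  rw [← integral_iUnion_fintype (fun j => h.meas1 1 j z) ?_ (fun j => (h.int1 hs i).integrableOn)]
  · congr 2
    ext ω; simp
  · intro j j' hne
    exact Set.disjoint_left.2 fun ω h1 h2 => hne (h1.1.symm.trans h2.1)

lemma phi_eq (h : IsMRP η κ ζ P Q) {s : ℝ} (hs : 0 ≤ s) (i : Fin m) :
    ∫ ω, Real.exp (-(s * κ 1 ω)) ∂(P i) = ∑ j, cc η κ ζ P s false i j + bb η κ ζ P s i := by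
  rw [bb, h.sum_cc hs, h.sum_cc hs, ← integral_add_compl (h.meas_z false) (h.int1 hs i)]
  congr 3
  ext ω; simp

lemma bb_zero (h : IsMRP η κ ζ P Q) (i : Fin m) :
    bb η κ ζ P 0 i = (P i {ω | ζ 1 ω = true}).toReal := by
  rw [bb, h.sum_cc le_rfl]; simp [measureReal_def]

lemma p_eq (h : IsMRP η κ ζ P Q) (i j : Fin m) :
    (P i {ω | η 1 ω = j}).toReal = cc η κ ζ P 0 false i j + cc η κ ζ P 0 true i j := by
  have := h.prob i
  have h1 : ∀ z, cc η κ ζ P 0 z i j = (P i).real {ω | η 1 ω = j ∧ ζ 1 ω = z} := by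
    intro z; simp [cc]
  rw [h1, h1, ← measureReal_union (Set.disjoint_left.2 fun ω h1 h2 => by
    have := h1.2.symm.trans h2.2; simp at this) (h.meas1 _ _ _), measureReal_def]
  congr 2
  ext ω
  simp only [mem_union, mem_ofPred_eq]
  cases ζ 1 ω <;> simp

lemma sum_zero (h : IsMRP η κ ζ P Q) (i : Fin m) :
    ∑ j, cc η κ ζ P 0 false i j + bb η κ ζ P 0 i = 1 := by
  have := h.prob i
  rw [← h.phi_eq le_rfl]; simp

lemma bb_nonneg (s : ℝ) (i : Fin m) : 0 ≤ bb η κ ζ P s i :=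
  Finset.sum_nonneg fun _ _ => cc_nonneg _ _ _ _

lemma bb_le (h : IsMRP η κ ζ P Q) {s : ℝ} (hs : 0 ≤ s) (i : Fin m) :
    bb η κ ζ P s i ≤ bb η κ ζ P 0 i :=
  Finset.sum_le_sum fun _ _ => h.cc_le hs _ _ _

lemma bb_diff (h : IsMRP η κ ζ P Q) {s : ℝ} (hs : 0 ≤ s) {δ : ℝ} (hδ : 0 ≤ δ) (i : Fin m) :
    bb η κ ζ P 0 i - bb η κ ζ P s i ≤ (1 - Real.exp (-(s * δ))) * bb η κ ζ P 0 i +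
      (P i {ω | δ < κ 1 ω ∧ ζ 1 ω = true}).toReal := by
  have := h.prob i
  have hmδ : MeasurableSet {ω | δ < κ 1 ω ∧ ζ 1 ω = true} :=
    (h.mκ 1 measurableSet_Ioi).inter (h.meas_z true)
  have hmδ' : MeasurableSet {ω | δ < κ 1 ω} := h.mκ 1 measurableSet_Ioi
  have h1 : (P i {ω | δ < κ 1 ω ∧ ζ 1 ω = true}).toReal =
      ∫ ω in {ω | ζ 1 ω = true}, ({ω | δ < κ 1 ω}.indicator (fun _ => (1:ℝ)) ω) ∂(P i) := by
    rw [setIntegral_indicator hmδ']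
    simp only [integral_const, smul_eq_mul, mul_one, measureReal_def, Measure.restrict_apply_univ]
    congr 2
    ext ω; simp [and_comm]
  have hint : IntegrableOn (fun ω => ({ω | δ < κ 1 ω}.indicator (fun _ => (1:ℝ)) ω))
      {ω | ζ 1 ω = true} (P i) := ((integrable_const (1:ℝ)).indicator hmδ').integrableOn
  have h2 : bb η κ ζ P 0 i = ∫ ω in {ω | ζ 1 ω = true}, (1:ℝ) ∂(P i) := by
    rw [h.bb_zero]; simp [measureReal_def]
  have h3 : bb η κ ζ P s i = ∫ ω in {ω | ζ 1 ω = true}, Real.exp (-(s * κ 1 ω)) ∂(P i) := by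
    rw [bb, h.sum_cc hs]
  have h4 : bb η κ ζ P 0 i - bb η κ ζ P s i =
      ∫ ω in {ω | ζ 1 ω = true}, (1 - Real.exp (-(s * κ 1 ω))) ∂(P i) := by
    rw [h2, h3, ← integral_sub (integrable_const _).integrableOn (h.int1 hs i).integrableOn]
  rw [h4, h1, h2, ← integral_const_mul, ← integral_add (integrable_const _).integrableOn hint]
  refine setIntegral_mono ((integrable_const _).sub (h.int1 hs i)).integrableOn
    (((integrable_const _).integrableOn).add hint) fun ω => ?_
  have hpos := Real.exp_pos (-(s * κ 1 ω))
  by_cases hω : δ < κ 1 ω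
  · have hle : Real.exp (-(s * δ)) ≤ 1 := exp_le hs hδ
    simp only [Set.indicator, mem_ofPred_eq, hω, if_true]
    linarith
  · have hm : Real.exp (-(s * δ)) ≤ Real.exp (-(s * κ 1 ω)) :=
      Real.exp_le_exp.2 (by nlinarith)
    simp only [Set.indicator, mem_ofPred_eq, hω, if_false]
    linarith

end IsMRP

lemma sd_balance {m : ℕ} {p : Fin m → Fin m → ℝ} {π : Fin m → ℝ} (h : IsStationaryDist p π)
    (F : Fin m → ℝ) : ∑ i, π i * ∑ j, p i j * F j = ∑ i, π i * F i := by
  simp_rw [Finset.mul_sum]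
  rw [Finset.sum_comm]
  refine Finset.sum_congr rfl fun j _ => ?_
  conv_rhs => rw [h.2.2 j, Finset.sum_mul]
  exact Finset.sum_congr rfl fun i _ => by ring

lemma sd_energy {m : ℕ} {p : Fin m → Fin m → ℝ} {π : Fin m → ℝ} (h : IsStationaryDist p π)
    (hp1 : ∀ i, ∑ j, p i j = 1) (F : Fin m → ℝ) :
    ∑ i, π i * ∑ j, p i j * (F j - F i) ^ 2 =
      2 * ∑ i, π i * (F i * (F i - ∑ j, p i j * F j)) := by
  have h1 := sd_balance h (fun i => F i ^ 2)
  have h2 : ∀ i, ∑ j, p i j * (F j - F i) ^ 2 =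
      ∑ j, p i j * F j ^ 2 - 2 * F i * ∑ j, p i j * F j + F i ^ 2 := by
    intro i
    calc ∑ j, p i j * (F j - F i) ^ 2
        = ∑ j, (p i j * F j ^ 2 - 2 * F i * (p i j * F j) + F i ^ 2 * p i j) :=
          Finset.sum_congr rfl fun j _ => by ring
      _ = _ := by
          rw [Finset.sum_add_distrib, Finset.sum_sub_distrib, ← Finset.mul_sum, ← Finset.mul_sum,
            hp1, mul_one]
  have h3 : ∑ i, π i * ∑ j, p i j * (F j - F i) ^ 2 =
      ∑ i, π i * ∑ j, p i j * F j ^ 2 + ∑ i, π i * (F i ^ 2 - 2 * F i * ∑ j, p i j * F j) := by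
    rw [← Finset.sum_add_distrib]
    exact Finset.sum_congr rfl fun i _ => by rw [h2]; ring
  rw [h3, h1, ← Finset.sum_add_distrib, Finset.mul_sum]
  exact Finset.sum_congr rfl fun i _ => by ring

lemma sd_lower {m : ℕ} {p : Fin m → Fin m → ℝ} {π : Fin m → ℝ} (hst : IsStationaryDist p π)
    (hp0 : ∀ i j, 0 ≤ p i j) {N : ℕ} {c : ℕ → Fin m} (hcN : c N = c 0)
    (hcov : ∀ i : Fin m, ∃ k ≤ N, c k = i) {δ : ℝ} (hδ : 0 < δ) (hδ1 : δ ≤ 1)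
    (hring : ∀ k < N, δ ≤ p (c k) (c (k + 1))) (i : Fin m) : δ ^ (2 * N) / m ≤ π i := by
  have step : ∀ k < N, δ * π (c k) ≤ π (c (k + 1)) := by
    intro k hk
    rw [hst.2.2 (c (k + 1))]
    refine le_trans ?_ (Finset.single_le_sum (f := fun i => π i * p i (c (k + 1)))
      (fun i _ => mul_nonneg (hst.1 i) (hp0 _ _)) (Finset.mem_univ (c k)))
    nlinarith [hring k hk, hst.1 (c k)]
  have steps : ∀ d k, k + d ≤ N → δ ^ d * π (c k) ≤ π (c (k + d)) := by
    intro d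
    induction d with
    | zero => intro k _; simp
    | succ d ih =>
      intro k hk
      have h1 := ih k (by omega)
      have h2 := step (k + d) (by omega)
      calc δ ^ (d + 1) * π (c k) = δ * (δ ^ d * π (c k)) := by ring
        _ ≤ δ * π (c (k + d)) := by gcongr
        _ ≤ _ := h2
  have key : ∀ j, δ ^ (2 * N) * π j ≤ π i := by
    intro j
    obtain ⟨k, hk, rfl⟩ := hcov j
    obtain ⟨l, hl, rfl⟩ := hcov i
    have h1 := steps (N - k) k (by omega)
    rw [show k + (N - k) = N by omega, hcN] at h1
    have h2 := steps l 0 (by omega)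
    rw [zero_add] at h2
    calc δ ^ (2 * N) * π (c k) ≤ δ ^ (l + (N - k)) * π (c k) := by
          apply mul_le_mul_of_nonneg_right _ (hst.1 _)
          exact pow_le_pow_of_le_one hδ.le hδ1 (by omega)
      _ = δ ^ l * (δ ^ (N - k) * π (c k)) := by ring
      _ ≤ δ ^ l * π (c 0) := by gcongr
      _ ≤ _ := h2
  have hm : (0 : ℝ) < m := by
    have := i.pos
    exact_mod_cast this
  have h1 := Finset.sum_le_sum (s := Finset.univ) fun j _ => key j
  rw [← Finset.mul_sum, hst.2.1] at h1
  simp at h1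
  rw [div_le_iff₀ hm]
  linarith

lemma sd_osc {m : ℕ} {p : Fin m → Fin m → ℝ} {π : Fin m → ℝ} (hst : IsStationaryDist p π)
    (hp0 : ∀ i j, 0 ≤ p i j) (hp1 : ∀ i, ∑ j, p i j = 1)
    {N : ℕ} {c : ℕ → Fin m}
    (hcov : ∀ i : Fin m, ∃ k ≤ N, c k = i) {δ γ : ℝ} (hδ : 0 < δ) (hγ : 0 < γ)
    (hring : ∀ k < N, δ ≤ p (c k) (c (k + 1))) (hπ : ∀ i, γ ≤ π i)
    {a : Fin m → Fin m → ℝ} {b F : Fin m → ℝ} {ρ : ℝ} (hρ : 0 ≤ ρ)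
    (hap : ∀ i j, a i j ≤ p i j) (hb : ∀ i, b i ≤ ρ)
    (hF0 : ∀ i, 0 ≤ F i) (hF1 : ∀ i, F i ≤ 1) (hF : ∀ i, F i = b i + ∑ j, a i j * F j)
    (i j : Fin m) : |F i - F j| ≤ 2 * N * Real.sqrt (2 * ρ / (γ * δ)) := by
  have hE := sd_energy hst hp1 F
  have hEle : ∑ i, π i * ∑ j, p i j * (F j - F i) ^ 2 ≤ 2 * ρ := by
    rw [hE]
    have : ∑ i, π i * (F i * (F i - ∑ j, p i j * F j)) ≤ ∑ i, π i * ρ := by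
      refine Finset.sum_le_sum fun i _ => mul_le_mul_of_nonneg_left ?_ (hst.1 i)
      have h1 : ∑ j, a i j * F j ≤ ∑ j, p i j * F j :=
        Finset.sum_le_sum fun j _ => mul_le_mul_of_nonneg_right (hap i j) (hF0 j)
      have h2 : F i - ∑ j, p i j * F j ≤ ρ := by linarith [hF i, hb i]
      nlinarith [hF0 i, hF1 i]
    rw [← Finset.sum_mul, hst.2.1] at this
    linarith
  have hγδ : 0 < γ * δ := mul_pos hγ hδ
  have step : ∀ k < N, |F (c (k + 1)) - F (c k)| ≤ Real.sqrt (2 * ρ / (γ * δ)) := by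
    intro k hk
    apply Real.abs_le_sqrt
    rw [le_div_iff₀ hγδ]
    refine le_trans ?_ hEle
    refine le_trans ?_ (Finset.single_le_sum (f := fun i => π i * ∑ j, p i j * (F j - F i) ^ 2)
      (fun i _ => mul_nonneg (hst.1 i) (Finset.sum_nonneg fun j _ =>
        mul_nonneg (hp0 i j) (sq_nonneg _))) (Finset.mem_univ (c k)))
    have h3 := (Finset.single_le_sum (f := fun j => p (c k) j * (F j - F (c k)) ^ 2)
      (fun j _ => mul_nonneg (hp0 _ j) (sq_nonneg _)) (Finset.mem_univ (c (k + 1))))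
    calc (F (c (k + 1)) - F (c k)) ^ 2 * (γ * δ) = γ * (δ * (F (c (k + 1)) - F (c k)) ^ 2) := by ring
      _ ≤ π (c k) * (p (c k) (c (k + 1)) * (F (c (k + 1)) - F (c k)) ^ 2) := by
          have := hπ (c k)
          have := hring k hk
          gcongr
          exact hst.1 _
      _ ≤ _ := mul_le_mul_of_nonneg_left h3 (hst.1 _)
  set r := Real.sqrt (2 * ρ / (γ * δ))
  have hr : 0 ≤ r := Real.sqrt_nonneg _
  have steps : ∀ k ≤ N, |F (c k) - F (c 0)| ≤ k * r := by
    intro k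
    induction k with
    | zero => simp
    | succ k ih =>
      intro hk
      have h1 := ih (by omega)
      have h2 := step k (by omega)
      have h3 := abs_sub_le (F (c (k + 1))) (F (c k)) (F (c 0))
      push_cast
      linarith
  have all : ∀ i, |F i - F (c 0)| ≤ N * r := by
    intro i
    obtain ⟨k, hk, rfl⟩ := hcov i
    refine (steps k hk).trans ?_
    gcongr
  have h1 := all i
  have h2 := all j
  have h3 := abs_sub_le (F i) (F (c 0)) (F j)
  rw [abs_sub_comm (F (c 0))] at h3
  linarith

section core
variable {m : ℕ} {Ω : Type} [MeasurableSpace Ω]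
    {η : ℕ → Ω → Fin m} {κ : ℕ → Ω → ℝ} {ζ : ℕ → Ω → Bool}
    {P : Fin m → Measure Ω} {Q : Fin m → Fin m → ℝ → Bool → ℝ}
    {p : Fin m → Fin m → ℝ} {π : Fin m → ℝ}

open IsMRP

lemma core_p (h : IsMRP η κ ζ P Q) (hp : ∀ i j, p i j = (P i {ω | η 1 ω = j}).toReal) :
    (∀ i j, 0 ≤ p i j) ∧ (∀ i, ∑ j, p i j = 1) ∧
      (∀ s, 0 ≤ s → ∀ i j, cc η κ ζ P s false i j ≤ p i j) := by
  refine ⟨fun i j => ?_, fun i => ?_, fun s hs i j => ?_⟩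
  · rw [hp]; exact ENNReal.toReal_nonneg
  · simp_rw [hp, h.p_eq]
    rw [Finset.sum_add_distrib]
    exact h.sum_zero i
  · rw [hp, h.p_eq]
    linarith [h.cc_le hs false i j, cc_nonneg (η := η) (κ := κ) (ζ := ζ) (P := P) 0 true i j]

lemma core_one (h : IsMRP η κ ζ P Q) (hp : ∀ i j, p i j = (P i {ω | η 1 ω = j}).toReal)
    (hst : IsStationaryDist p π) {N : ℕ} {c : ℕ → Fin m}
    (hcov : ∀ i : Fin m, ∃ k ≤ N, c k = i) {δ γ : ℝ} (hδ : 0 < δ) (hγ : 0 < γ)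
    (hring : ∀ k < N, δ ≤ p (c k) (c (k + 1))) (hπ : ∀ i, γ ≤ π i)
    (hrare : ∃ i, 0 < bb η κ ζ P 0 i) (i : Fin m) : FF κ ζ P 0 i = 1 := by
  obtain ⟨hp0, hp1, hap⟩ := core_p h hp
  obtain ⟨i0, hi0⟩ := hrare
  have hF : ∀ i, (1 - FF κ ζ P 0 i) = 0 + ∑ j, cc η κ ζ P 0 false i j * (1 - FF κ ζ P 0 j) := by
    intro i
    have h1 := h.FF_eq le_rfl i
    have h2 := h.sum_zero i
    simp_rw [mul_sub, mul_one]
    rw [Finset.sum_sub_distrib]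
    linarith
  have hosc := fun i j => sd_osc hst hp0 hp1 hcov hδ hγ hring hπ (a := cc η κ ζ P 0 false)
    (b := fun _ => 0) (F := fun i => 1 - FF κ ζ P 0 i) le_rfl (hap 0 le_rfl) (fun _ => le_rfl)
    (fun i => by linarith [h.FF_le_one le_rfl i])
    (fun i => by linarith [FF_nonneg (κ := κ) (ζ := ζ) (P := P) 0 i]) hF i j
  have heq : ∀ j, 1 - FF κ ζ P 0 j = 1 - FF κ ζ P 0 i0 := by
    intro j
    have := hosc j i0
    simp only [mul_zero, zero_div, Real.sqrt_zero] at this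
    exact sub_eq_zero.1 (abs_nonpos_iff.1 this)
  have h1 := hF i0
  simp_rw [heq] at h1
  rw [← Finset.sum_mul] at h1
  have h2 := h.sum_zero i0
  have h3 : bb η κ ζ P 0 i0 * (1 - FF κ ζ P 0 i0) = 0 := by
    have h4 : ∑ j, cc η κ ζ P 0 false i0 j = 1 - bb η κ ζ P 0 i0 := by linarith
    rw [h4] at h1
    linarith
  have h5 := (mul_eq_zero.1 h3).resolve_left hi0.ne'
  have h6 := heq i
  linarith

lemma core_osc (h : IsMRP η κ ζ P Q) (hp : ∀ i j, p i j = (P i {ω | η 1 ω = j}).toReal)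
    (hst : IsStationaryDist p π) {N : ℕ} {c : ℕ → Fin m}
    (hcov : ∀ i : Fin m, ∃ k ≤ N, c k = i) {δ γ : ℝ} (hδ : 0 < δ) (hγ : 0 < γ)
    (hring : ∀ k < N, δ ≤ p (c k) (c (k + 1))) (hπ : ∀ i, γ ≤ π i)
    {s : ℝ} (hs : 0 ≤ s) (i j : Fin m) : |FF κ ζ P s i - FF κ ζ P s j| ≤
      2 * N * Real.sqrt (2 * (∑ i, bb η κ ζ P 0 i) / (γ * δ)) := by
  obtain ⟨hp0, hp1, hap⟩ := core_p h hp
  refine sd_osc hst hp0 hp1 hcov hδ hγ hring hπ (a := cc η κ ζ P s false)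
    (b := bb η κ ζ P s) (F := FF κ ζ P s) ?_ (hap s hs) (fun i => ?_)
    (fun i => FF_nonneg s i) (fun i => h.FF_le_one hs i) (h.FF_eq hs) i j
  · exact Finset.sum_nonneg fun i _ => bb_nonneg 0 i
  · exact (h.bb_le hs i).trans (Finset.single_le_sum (f := fun i => bb η κ ζ P 0 i)
      (fun i _ => bb_nonneg 0 i) (Finset.mem_univ i))

lemma core_bal (h : IsMRP η κ ζ P Q) (hp : ∀ i j, p i j = (P i {ω | η 1 ω = j}).toReal)
    (hst : IsStationaryDist p π) {s : ℝ} (hs : 0 ≤ s) {x o : ℝ}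
    (ho : ∀ j, |FF κ ζ P s j - x| ≤ o) :
    |(∑ i, π i * bb η κ ζ P s i) -
      ((1 - ∑ i, π i * ∫ ω, Real.exp (-(s * κ 1 ω)) ∂(P i)) + ∑ i, π i * bb η κ ζ P s i) * x| ≤
      ((1 - ∑ i, π i * ∫ ω, Real.exp (-(s * κ 1 ω)) ∂(P i)) + ∑ i, π i * bb η κ ζ P s i) * o := by
  obtain ⟨hp0, hp1, hap⟩ := core_p h hp
  have hD : (1 - ∑ i, π i * ∫ ω, Real.exp (-(s * κ 1 ω)) ∂(P i)) + ∑ i, π i * bb η κ ζ P s i =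
      ∑ i, π i * ∑ j, (p i j - cc η κ ζ P s false i j) := by
    simp_rw [h.phi_eq hs, Finset.sum_sub_distrib, hp1, mul_sub, mul_add, Finset.sum_sub_distrib,
      Finset.sum_add_distrib, mul_one, hst.2.1]
    ring
  have hB : ∑ i, π i * bb η κ ζ P s i =
      ∑ i, π i * ∑ j, (p i j - cc η κ ζ P s false i j) * FF κ ζ P s j := by
    have h1 := sd_balance hst (FF κ ζ P s)
    have h2 : ∀ i, bb η κ ζ P s i = FF κ ζ P s i - ∑ j, cc η κ ζ P s false i j * FF κ ζ P s j := by
      intro i; linarith [h.FF_eq hs i]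
    simp_rw [h2, sub_mul, Finset.sum_sub_distrib, mul_sub, Finset.sum_sub_distrib]
    rw [h1]
  have hdiff : (∑ i, π i * ∑ j, (p i j - cc η κ ζ P s false i j) * FF κ ζ P s j) -
      (∑ i, π i * ∑ j, (p i j - cc η κ ζ P s false i j)) * x =
      ∑ i, π i * ∑ j, (p i j - cc η κ ζ P s false i j) * (FF κ ζ P s j - x) := by
    rw [Finset.sum_mul, ← Finset.sum_sub_distrib]
    refine Finset.sum_congr rfl fun i _ => ?_
    rw [mul_assoc, ← mul_sub, Finset.sum_mul, ← Finset.sum_sub_distrib]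
    simp_rw [mul_sub]
  rw [hD]
  conv_lhs => rw [hB]
  rw [hdiff]
  refine (Finset.abs_sum_le_sum_abs _ _).trans ?_
  rw [Finset.sum_mul]
  refine Finset.sum_le_sum fun i _ => ?_
  rw [abs_mul, abs_of_nonneg (hst.1 i), mul_assoc]
  refine mul_le_mul_of_nonneg_left ?_ (hst.1 i)
  refine (Finset.abs_sum_le_sum_abs _ _).trans ?_
  rw [Finset.sum_mul]
  refine Finset.sum_le_sum fun j _ => ?_
  have := hap s hs i j
  rw [abs_mul, abs_of_nonneg (by linarith)]
  exact mul_le_mul_of_nonneg_left (ho j) (by linarith)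

lemma core_ratio (h : IsMRP η κ ζ P Q) (hπ0 : ∀ i, 0 ≤ π i) {s : ℝ} (hs : 0 ≤ s) {δ : ℝ}
    (hδ : 0 ≤ δ) :
    (∑ i, π i * bb η κ ζ P 0 i) - ∑ i, π i * bb η κ ζ P s i ≤
      ((s * δ) + ∑ i, (P i {ω | δ < κ 1 ω ∧ ζ 1 ω = true}).toReal / bb η κ ζ P 0 i) *
      ∑ i, π i * bb η κ ζ P 0 i := by
  have := h.prob
  rw [← Finset.sum_sub_distrib, Finset.mul_sum]
  refine Finset.sum_le_sum fun i _ => ?_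
  rw [← mul_sub, mul_left_comm]
  refine mul_le_mul_of_nonneg_left ((h.bb_diff hs hδ i).trans ?_) (hπ0 i)
  have h0 := bb_nonneg (η := η) (κ := κ) (ζ := ζ) (P := P) 0 i
  rw [add_mul]
  refine add_le_add (mul_le_mul_of_nonneg_right ?_ h0) ?_
  · linarith [Real.add_one_le_exp (-(s * δ))]
  · have h1 : (P i {ω | δ < κ 1 ω ∧ ζ 1 ω = true}).toReal / bb η κ ζ P 0 i ≤
        ∑ i, (P i {ω | δ < κ 1 ω ∧ ζ 1 ω = true}).toReal / bb η κ ζ P 0 i :=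
      Finset.single_le_sum
        (f := fun i => (P i {ω | δ < κ 1 ω ∧ ζ 1 ω = true}).toReal / bb η κ ζ P 0 i)
        (fun i _ => div_nonneg ENNReal.toReal_nonneg (bb_nonneg 0 i)) (Finset.mem_univ i)
    rcases h0.eq_or_lt with h2 | h2
    · rw [← h2, mul_zero]
      refine le_trans ?_ (h2.trans (h.bb_zero i)).ge
      refine ENNReal.toReal_mono (measure_ne_top _ _) (measure_mono fun ω hω => hω.2)
    · rwa [div_le_iff₀ h2] at h1

end core

lemma lap_facts (μ : Measure ℝ) [IsProbabilityMeasure μ] (hμnn : μ (Iio 0) = 0)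
    (hμ0 : μ {0} < 1) :
    (∀ s > 0, 0 < ∫ x, Real.exp (-(s * x)) ∂μ) ∧ (∀ s > 0, ∫ x, Real.exp (-(s * x)) ∂μ < 1) ∧
      Tendsto (fun s => ∫ x, Real.exp (-(s * x)) ∂μ) (𝓝[>] (0:ℝ)) (𝓝 1) := by
  have hae : ∀ᵐ x ∂μ, 0 ≤ x := by
    rw [ae_iff]
    convert hμnn using 2
    ext x; simp
  have hint : ∀ s > 0, Integrable (fun x => Real.exp (-(s * x))) μ := by
    intro s hs
    refine Integrable.of_bound (C := 1) (by fun_prop) ?_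
    filter_upwards [hae] with x hx
    rw [Real.norm_eq_abs, abs_of_pos (Real.exp_pos _)]
    exact IsMRP.exp_le hs.le hx
  refine ⟨fun s hs => integral_exp_pos (hint s hs), fun s hs => ?_, ?_⟩
  · have h1 : 0 < ∫ x, (1 - Real.exp (-(s * x))) ∂μ := by
      rw [integral_pos_iff_support_of_nonneg_ae]
      · have : Function.support (fun x => 1 - Real.exp (-(s * x))) = {0}ᶜ := by
          ext x
          rw [Function.mem_support, mem_compl_iff, mem_singleton_iff, ne_eq, sub_eq_zero,
            eq_comm, Real.exp_eq_one_iff]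
          simp [hs.ne']
        rw [this, prob_compl_eq_one_sub (measurableSet_singleton 0)]
        exact tsub_pos_of_lt hμ0
      · filter_upwards [hae] with x hx
        have := IsMRP.exp_le hs.le hx
        simp only [Pi.zero_apply]
        linarith
      · exact (integrable_const _).sub (hint s hs)
    rw [integral_sub (integrable_const _) (hint s hs)] at h1
    simp at h1
    exact h1
  · have h1 : Tendsto (fun s => ∫ x, Real.exp (-(s * x)) ∂μ) (𝓝[>] (0:ℝ)) (𝓝 (∫ x, (1:ℝ) ∂μ)) := by
      refine tendsto_integral_filter_of_dominated_convergence (fun _ => 1) ?_ ?_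
        (integrable_const _) ?_
      · exact Eventually.of_forall fun s => by fun_prop
      · filter_upwards [self_mem_nhdsWithin] with s hs
        filter_upwards [hae] with x hx
        rw [Real.norm_eq_abs, abs_of_pos (Real.exp_pos _)]
        exact IsMRP.exp_le (le_of_lt hs) hx
      · refine Eventually.of_forall fun x => ?_
        have : Tendsto (fun s : ℝ => Real.exp (-(s * x))) (𝓝 0) (𝓝 (Real.exp (-(0 * x)))) :=
          Continuous.tendsto (by fun_prop) 0
        simp only [zero_mul, neg_zero, Real.exp_zero] at this
        exact this.mono_left nhdsWithin_le_nhds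
    simpa using h1

/-- Theorem 1, necessity part: under conditions A, B and C, if the
first-rare-event times `ξ_ε` converge in distribution (for some family of initial
distributions) to a nonnegative random variable `ξ₀` whose law `μ` is not concentrated
at zero, then condition D₁ holds and `E e^{−sξ₀} = 1/(1 + A(s))`. -/
theorem stmt7 {m : ℕ} (hm : 0 < m) (ε₀ : ℝ) (hε₀ : 0 < ε₀)
    {Ω : Type} [MeasurableSpace Ω]
    (η : ℝ → ℕ → Ω → Fin m) (κ : ℝ → ℕ → Ω → ℝ) (ζ : ℝ → ℕ → Ω → Bool)
    (Pstart : ℝ → Fin m → Measure Ω)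
    (hprob : ∀ ε i, IsProbabilityMeasure (Pstart ε i))
    (hmeas : ∀ ε n, Measurable (η ε n) ∧ Measurable (κ ε n) ∧ Measurable (ζ ε n))
    (hκnn : ∀ ε n ω, 0 ≤ κ ε n ω)
    (Q : ℝ → Fin m → Fin m → ℝ → Bool → ℝ)
    (hMRP : ∀ ε ∈ Ioc (0:ℝ) ε₀, ∀ n : ℕ, ∀ I : ℕ → Fin m, ∀ T : ℕ → ℝ, ∀ Z : ℕ → Bool,
      Pstart ε (I 0)
          {ω | ∀ k ≤ n, (η ε k ω = I k ∧ (1 ≤ k → (κ ε k ω ≤ T k ∧ ζ ε k ω = Z k)))}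
        = ENNReal.ofReal (∏ k ∈ Finset.Icc 1 n, Q ε (I (k - 1)) (I k) (T k) (Z k)))
    (p : ℝ → Fin m → Fin m → ℝ)
    (hp : ∀ ε ∈ Ioc (0:ℝ) ε₀, ∀ i j, p ε i j = (Pstart ε i {ω | η ε 1 ω = j}).toReal)
    (hB : CondB p)
    (π : ℝ → Fin m → ℝ)
    (hπ : ∀ᶠ ε in 𝓝[>] (0:ℝ), IsStationaryDist (fun i j => p ε i j) (π ε))
    -- condition A
    (hA1 : ∀ ε ∈ Ioc (0:ℝ) ε₀, ∃ i, 0 < rareP Pstart ζ ε i)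
    (hA2 : ∀ i, Tendsto (fun ε => rareP Pstart ζ ε i) (𝓝[>] (0:ℝ)) (𝓝 0))
    -- condition C
    (hC : ∀ i : Fin m, ∀ δ > 0, Tendsto
      (fun ε => (Pstart ε i {ω | δ < κ ε 1 ω ∧ ζ ε 1 ω = true}).toReal / rareP Pstart ζ ε i)
      (𝓝[>] (0:ℝ)) (𝓝 0))
    -- some family of initial distributions
    (q : ℝ → Fin m → ℝ) (Pq : ℝ → Measure Ω)
    (hq : ∀ ε ∈ Ioc (0:ℝ) ε₀, (∀ i, 0 ≤ q ε i) ∧ ∑ i, q ε i = 1)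
    (hmix : ∀ ε ∈ Ioc (0:ℝ) ε₀, Pq ε = ∑ i, ENNReal.ofReal (q ε i) • Pstart ε i)
    -- ξ_ε converges in distribution to the law μ of ξ₀, nonnegative and not
    -- concentrated at zero
    (μ : Measure ℝ) (hμprob : IsProbabilityMeasure μ) (hμnn : μ (Iio 0) = 0)
    (hμ0 : μ {0} < 1)
    (hconv : ∀ s > 0, Tendsto (fun ε => ∫ ω, Real.exp (-(s * xiRE κ ζ ε ω)) ∂(Pq ε))
      (𝓝[>] (0:ℝ)) (𝓝 (∫ x, Real.exp (-(s * x)) ∂μ))) :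
    ∃ A : ℝ → ℝ,
      (∀ s > 0, Tendsto
        (fun ε => (avgRare Pstart ζ π ε)⁻¹ * (1 - lapPhi Pstart κ π ε s))
        (𝓝[>] (0:ℝ)) (𝓝 (A s))) ∧
      (∀ s > 0, 0 < A s) ∧
      Tendsto A (𝓝[>] (0:ℝ)) (𝓝 0) ∧
      ∀ s > 0, ∫ x, Real.exp (-(s * x)) ∂μ = 1 / (1 + A s) := by
  classical
  obtain ⟨hL0, hL1, hLlim⟩ := lap_facts μ hμnn hμ0
  have hIoc : ∀ᶠ ε in 𝓝[>] (0:ℝ), ε ∈ Ioc (0:ℝ) ε₀ := Ioc_mem_nhdsGT hε₀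
  have hM : ∀ ε ∈ Ioc (0:ℝ) ε₀, IsMRP (η ε) (κ ε) (ζ ε) (Pstart ε) (Q ε) := fun ε hε =>
    ⟨hprob ε, fun n => (hmeas ε n).1, fun n => (hmeas ε n).2.1, fun n => (hmeas ε n).2.2,
      hκnn ε, hMRP ε hε⟩
  have hrb : ∀ ε ∈ Ioc (0:ℝ) ε₀, ∀ i,
      IsMRP.bb (η ε) (κ ε) (ζ ε) (Pstart ε) 0 i = rareP Pstart ζ ε i :=
    fun ε hε i => (hM ε hε).bb_zero i
  obtain ⟨N, hN, c, hcN, hcov, hring⟩ := hB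
  -- a uniform lower bound along the ring
  obtain ⟨δ, hδ, hδ1, hδring⟩ : ∃ δ > 0, δ ≤ 1 ∧
      ∀ᶠ ε in 𝓝[>] (0:ℝ), ∀ k < N, δ ≤ p ε (c k) (c (k + 1)) := by
    have h1 : ∀ k : Fin N, ∃ d > 0, ∀ᶠ ε in 𝓝[>] (0:ℝ), d ≤ p ε (c k) (c (k + 1)) := by
      intro k
      have hk := hring k k.2
      refine ⟨_, half_pos hk, ?_⟩
      have hbdd : IsBoundedUnder (· ≥ ·) (𝓝[>] (0:ℝ)) (fun ε => p ε (c k) (c (k + 1))) := by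
        refine isBoundedUnder_of_eventually_ge (a := 0) ?_
        filter_upwards [hIoc] with ε hε
        rw [hp ε hε]
        exact ENNReal.toReal_nonneg
      exact (eventually_lt_of_lt_liminf (half_lt_self hk) hbdd).mono fun _ h => h.le
    choose d hd hd' using h1
    have : Nonempty (Fin N) := ⟨⟨0, hN⟩⟩
    refine ⟨min 1 (Finset.univ.inf' Finset.univ_nonempty d), ?_, min_le_left _ _, ?_⟩
    · refine lt_min one_pos ?_
      rw [Finset.lt_inf'_iff]
      exact fun k _ => hd k
    · filter_upwards [eventually_all.2 hd'] with ε hε k hk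
      exact (min_le_right _ _).trans ((Finset.inf'_le d (Finset.mem_univ (⟨k, hk⟩ : Fin N))).trans
        (hε ⟨k, hk⟩))
  set γ : ℝ := δ ^ (2 * N) / m with hγdef
  have hm' : (0:ℝ) < m := by exact_mod_cast hm
  have hγ : 0 < γ := div_pos (pow_pos hδ _) hm'
  have hπγ : ∀ᶠ ε in 𝓝[>] (0:ℝ), ∀ i, γ ≤ π ε i := by
    filter_upwards [hIoc, hπ, hδring] with ε hε hst hr i
    exact sd_lower hst (core_p (hM ε hε) (hp ε hε)).1 hcN hcov hδ hδ1 hr i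
  have havg : ∀ᶠ ε in 𝓝[>] (0:ℝ), 0 < avgRare Pstart ζ π ε := by
    filter_upwards [hIoc, hπγ] with ε hε hg
    obtain ⟨i, hi⟩ := hA1 ε hε
    refine Finset.sum_pos' (fun j _ => mul_nonneg (hγ.le.trans (hg j)) ENNReal.toReal_nonneg)
      ⟨i, Finset.mem_univ i, mul_pos (hγ.trans_le (hg i)) hi⟩
  have main : ∀ s > 0, Tendsto
        (fun ε => (avgRare Pstart ζ π ε)⁻¹ * (1 - lapPhi Pstart κ π ε s))
        (𝓝[>] (0:ℝ)) (𝓝 ((∫ x, Real.exp (-(s * x)) ∂μ)⁻¹ - 1)) := by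
    intro s hs
    set L := ∫ x, Real.exp (-(s * x)) ∂μ with hLdef
    have hLpos : 0 < L := hL0 s hs
    let B : ℝ → ℝ := fun ε => ∑ i, π ε i * IsMRP.bb (η ε) (κ ε) (ζ ε) (Pstart ε) s i
    let D : ℝ → ℝ := fun ε => (1 - lapPhi Pstart κ π ε s) + B ε
    let x : ℝ → ℝ := fun ε => ∫ ω, Real.exp (-(s * xiRE κ ζ ε ω)) ∂(Pq ε)
    let o : ℝ → ℝ := fun ε =>
      2 * N * Real.sqrt (2 * (∑ i, rareP Pstart ζ ε i) / (γ * δ))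
    have hx : Tendsto x (𝓝[>] (0:ℝ)) (𝓝 L) := hconv s hs
    have ho : Tendsto o (𝓝[>] (0:ℝ)) (𝓝 0) := by
      have h1 : Tendsto (fun ε => ∑ i, rareP Pstart ζ ε i) (𝓝[>] (0:ℝ)) (𝓝 0) := by
        simpa using tendsto_finsetSum Finset.univ fun i _ => hA2 i
      have h2 := (((h1.const_mul 2).div_const (γ * δ)).sqrt).const_mul (2 * (N:ℝ))
      simpa [o] using h2
    have havgB : ∀ ε ∈ Ioc (0:ℝ) ε₀, avgRare Pstart ζ π ε =
        ∑ i, π ε i * IsMRP.bb (η ε) (κ ε) (ζ ε) (Pstart ε) 0 i := by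
      intro ε hε
      exact Finset.sum_congr rfl fun i _ => by rw [hrb ε hε]
    -- B / p → 1
    have hBp : Tendsto (fun ε => B ε / avgRare Pstart ζ π ε) (𝓝[>] (0:ℝ)) (𝓝 1) := by
      rw [Metric.tendsto_nhds]
      intro e he
      have hsum : Tendsto (fun ε => ∑ i, (Pstart ε i {ω | e / (2 * s) < κ ε 1 ω ∧
          ζ ε 1 ω = true}).toReal / rareP Pstart ζ ε i) (𝓝[>] (0:ℝ)) (𝓝 0) := by
        simpa using tendsto_finsetSum Finset.univ fun i _ => hC i (e / (2 * s)) (by positivity)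
      filter_upwards [hIoc, hπγ, havg, hsum.eventually_lt_const (half_pos he)] with ε hε hg ha hlt
      have hπ0 : ∀ i, 0 ≤ π ε i := fun i => hγ.le.trans (hg i)
      have h1 := core_ratio (hM ε hε) hπ0 hs.le (δ := e / (2 * s)) (by positivity)
      have h2 : B ε ≤ avgRare Pstart ζ π ε := by
        rw [havgB ε hε]
        exact Finset.sum_le_sum fun i _ =>
          mul_le_mul_of_nonneg_left ((hM ε hε).bb_le hs.le i) (hπ0 i)
      rw [← havgB ε hε] at h1
      simp_rw [hrb ε hε] at h1
      have h3 : s * (e / (2 * s)) = e / 2 := by field_simp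
      rw [h3] at h1
      change avgRare Pstart ζ π ε - B ε ≤ _ at h1
      have h4 : avgRare Pstart ζ π ε - B ε < e * avgRare Pstart ζ π ε := by
        refine h1.trans_lt (mul_lt_mul_of_pos_right ?_ ha)
        linarith
      rw [Real.dist_eq, abs_sub_comm, abs_of_nonneg]
      · rw [sub_lt_comm, lt_div_iff₀ ha]
        linarith
      · rw [sub_nonneg, div_le_one ha]; exact h2
    have hBpos : ∀ᶠ ε in 𝓝[>] (0:ℝ), 0 < B ε := by
      filter_upwards [hBp.eventually_const_lt one_pos, havg] with ε h1 h2
      rwa [div_pos_iff_of_pos_right h2] at h1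
    have hDB : ∀ᶠ ε in 𝓝[>] (0:ℝ), B ε ≤ D ε := by
      filter_upwards [hIoc, hπ] with ε hε hst
      have : lapPhi Pstart κ π ε s ≤ 1 := by
        rw [← hst.2.1]
        refine Finset.sum_le_sum fun i _ => ?_
        have h1 := mul_le_mul_of_nonneg_left (a := π ε i)
          (b := ∫ ω, Real.exp (-(s * κ ε 1 ω)) ∂(Pstart ε i)) (c := 1) ?_ (hst.1 i)
        · linarith
        · have := (hM ε hε).sum_zero i
          rw [(hM ε hε).phi_eq hs.le, ← this]
          exact add_le_add (Finset.sum_le_sum fun j _ => (hM ε hε).cc_le hs.le _ _ _)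
            ((hM ε hε).bb_le hs.le i)
      simp only [D]
      linarith
    have hclose : ∀ᶠ ε in 𝓝[>] (0:ℝ), |B ε / D ε - x ε| ≤ o ε := by
      filter_upwards [hIoc, hπ, hδring, hπγ, hBpos, hDB] with ε hε hst hr hg hB0 hBD
      have h := hM ε hε
      have hrare : ∃ i, 0 < IsMRP.bb (η ε) (κ ε) (ζ ε) (Pstart ε) 0 i := by
        obtain ⟨i, hi⟩ := hA1 ε hε
        exact ⟨i, by rwa [hrb ε hε]⟩
      have hone := core_one h (hp ε hε) hst hcov hδ hγ hr hg hrare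
      have hosc := core_osc h (hp ε hε) hst hcov hδ hγ hr hg hs.le
      simp_rw [hrb ε hε] at hosc
      obtain ⟨hq0, hq1⟩ := hq ε hε
      have hxeq : x ε = ∑ i, q ε i * IsMRP.FF (κ ε) (ζ ε) (Pstart ε) s i := by
        simp only [x]
        rw [hmix ε hε, integral_finsetSum_measure]
        · refine Finset.sum_congr rfl fun i _ => ?_
          rw [integral_smul_measure, h.FF_eq_integral i (hone i), ENNReal.toReal_ofReal (hq0 i)]
          rfl
        · intro i _
          exact (h.int_xi hs.le i (hone i)).smul_measure ENNReal.ofReal_ne_top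
      have hFx : ∀ j, |IsMRP.FF (κ ε) (ζ ε) (Pstart ε) s j - x ε| ≤ o ε := by
        intro j
        have h1 : IsMRP.FF (κ ε) (ζ ε) (Pstart ε) s j - x ε =
            ∑ i, q ε i * (IsMRP.FF (κ ε) (ζ ε) (Pstart ε) s j -
              IsMRP.FF (κ ε) (ζ ε) (Pstart ε) s i) := by
          simp_rw [mul_sub, Finset.sum_sub_distrib, ← Finset.sum_mul]
          rw [hq1, one_mul, hxeq]
        rw [h1]
        refine (Finset.abs_sum_le_sum_abs _ _).trans ?_
        have h2 : o ε = ∑ i, q ε i * o ε := by rw [← Finset.sum_mul, hq1, one_mul]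
        rw [h2]
        refine Finset.sum_le_sum fun i _ => ?_
        rw [abs_mul, abs_of_nonneg (hq0 i)]
        exact mul_le_mul_of_nonneg_left (hosc j i) (hq0 i)
      have hbal := core_bal h (hp ε hε) hst hs.le hFx
      change |B ε - D ε * x ε| ≤ D ε * o ε at hbal
      have hD0 : 0 < D ε := hB0.trans_le hBD
      have h3 : B ε / D ε - x ε = (B ε - D ε * x ε) / D ε := by field_simp
      rw [h3, abs_div, abs_of_pos hD0, div_le_iff₀ hD0]
      linarith
    have hBDlim : Tendsto (fun ε => B ε / D ε) (𝓝[>] (0:ℝ)) (𝓝 L) := by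
      have h1 : Tendsto (fun ε => B ε / D ε - x ε) (𝓝[>] (0:ℝ)) (𝓝 0) :=
        squeeze_zero_norm' hclose ho
      have h2 := h1.add hx
      simpa using h2
    have hfin := ((hBDlim.inv₀ hLpos.ne').sub_const 1).mul hBp
    rw [mul_one] at hfin
    refine hfin.congr' ?_
    filter_upwards [hBpos, havg, hDB] with ε hB0 ha hBD
    have hD0 : D ε ≠ 0 := (hB0.trans_le hBD).ne'
    have hB0' := hB0.ne'
    have h1 : 1 - lapPhi Pstart κ π ε s = D ε - B ε := by simp only [D]; ring
    rw [h1]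
    field_simp
  refine ⟨fun s => (∫ x, Real.exp (-(s * x)) ∂μ)⁻¹ - 1, main, fun s hs => ?_, ?_, fun s hs => ?_⟩
  · have := (one_lt_inv₀ (hL0 s hs)).2 (hL1 s hs)
    linarith
  · have := (hLlim.inv₀ one_ne_zero).sub_const 1
    simpa using this
  · simp
end
end
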